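/- arXiv:1902.02818 — 2 statements merged into one kernel-verified Lean document; each statement's English description precedes it below -/
import Mathlib

section
/- Let α ∈ (0,1). There exist ν ∈ (0, π/2) and a constant c_ν > 0 such that for every λ ∈ ℂ with λ ≠ 0 and |arg λ| < π − ν, and every pair (u,w) in the graph of the operator A = (d/dx)D^α, one has c_ν |λ| ‖u‖_{L²(0,1)} ≤ ‖λu − w‖_{L²(0,1)}. (This is the sectorial resolvent estimate ‖(λI − A)⁻¹‖ ≤ 1/(c_ν|λ|) underlying the fact that A generates an analytic semigroup on L²(0,1).) -/
/-!
The estimate is a numerical range bound. Write `W = ∫₀ᵗ w` and `v = I^α w = u'`. Since `W(0) = 0`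
and `u(1) = 0`, integration by parts gives `∫ conj(w) u = -∫ conj(W) v` (`graph_pairing`), so it
suffices to show that `z = ∫ conj(W) v` lies in a sector around the positive axis of half-angle
less than `π/2`.

For `|φ| < π/2` and `ζ = e^{iφ}`, the Gamma integral on the ray through `ζ` (`laplace_rpow`) reads
`Γ(1-α) ζ^{α-1} t^{α-1} = ∫₀^∞ r^{-α} e^{-ζrt} dr`. Hence `v` is, up to the factor `ζ^{1-α}`, a
positive superposition of the functions `Y_r(t) = ∫₀ᵗ e^{-ζr(t-p)} w(p) dp`, and for each of
these an energy identity gives `Re (ζ ∫ conj(W) Y_r) ≥ 0` (`energy_nonneg`). Fubini then yields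
`Re (e^{iφα} z) ≥ 0` (`rotated_pairing_nonneg`). With `φ = ±π/4` this confines `z` to a sector of
half-angle `π/2 - πα/4`.

Finally, `∫ conj(λu - w) u = conj(λ) ‖u‖² + z`. Multiplying by the `e^{±iπα/4}` whose exponent has
the sign of `arg λ`, taking real parts and applying Cauchy–Schwarz gives the resolvent bound
(`resolvent_of_rotation`).

Primitives of merely integrable complex functions are integrated by parts through Fubini on a
triangle (`integral_primitive_mul`).
-/

open MeasureTheory Set Filter

/-- Riemann–Liouville fractional integral `I^γ f` on `(0,1)` (complex-valued),
with the convention `I⁰ f = f`. -/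
noncomputable def fracInt (γ : ℝ) (f : ℝ → ℂ) (x : ℝ) : ℂ :=
  if γ = 0 then f x
  else ((Real.Gamma γ)⁻¹ : ℝ) • ∫ p in (0:ℝ)..x, (((x - p) ^ (γ - 1) : ℝ) : ℂ) * f p

/-- `f` is square integrable (and a.e. strongly measurable) on `(0,1)`: `f ∈ L²(0,1)`. -/
def SqIntOn (f : ℝ → ℂ) : Prop :=
  MeasureTheory.AEStronglyMeasurable f (MeasureTheory.volume.restrict (Set.Ioc (0:ℝ) 1)) ∧
  MeasureTheory.IntegrableOn (fun x => ‖f x‖ ^ 2) (Set.Ioc (0:ℝ) 1)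

/-- `(u, w)` lies in the graph of `A = (d/dx) D^α`:  `u` is absolutely continuous on `[0,1]`
with `u' = I^α w` a.e., `u(1) = 0`, and `w ∈ L²(0,1)`; then `A u = w`. -/
def InGraphA (α : ℝ) (u w : ℝ → ℂ) : Prop :=
  u 1 = 0 ∧ SqIntOn w ∧
  IntervalIntegrable (fracInt α w) MeasureTheory.volume 0 1 ∧
  ∀ x ∈ Set.Icc (0:ℝ) 1, u x = u 0 + ∫ t in (0:ℝ)..x, fracInt α w t

/-- Square of the `L²(0,1)` norm. -/
noncomputable def L2normSq (f : ℝ → ℂ) : ℝ := ∫ x in (0:ℝ)..1, ‖f x‖ ^ 2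

/-- Square of the Gagliardo seminorm of order `s` on `(0,1)`. -/
noncomputable def sobSeminormSq (s : ℝ) (u : ℝ → ℂ) : ℝ :=
  ∫ x in (0:ℝ)..1, ∫ y in (0:ℝ)..1, ‖u x - u y‖ ^ 2 / |x - y| ^ (1 + 2 * s)

/-- Square of the fractional Sobolev `H^s(0,1)` norm `N_s(u)`. -/
noncomputable def sobNormSq (s : ℝ) (u : ℝ → ℂ) : ℝ :=
  L2normSq u + sobSeminormSq s u

/-! ### The Laplace representation of powers -/

theorem rpow_mul_exp_integrableOn {α t : ℝ} (hα1 : α < 1) (ht : 0 < t) :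
    IntegrableOn (fun r : ℝ => r ^ (-α) * Real.exp (-(t * r))) (Ioi 0) := by
  have := integrableOn_rpow_mul_exp_neg_mul_rpow (s := -α) (p := 1) (b := t) (by linarith) one_pos ht
  simpa using this

theorem rpow_mul_cexp_integrableOn {α : ℝ} {z : ℂ} (hα1 : α < 1) (hz : 0 < z.re) :
    IntegrableOn (fun r : ℝ => ((r ^ (-α) : ℝ) : ℂ) * Complex.exp (-(z * r))) (Ioi 0) := by
  refine (rpow_mul_exp_integrableOn hα1 hz).mono' ?_ ?_
  · apply Measurable.aestronglyMeasurable
    fun_prop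
  · filter_upwards [ae_restrict_mem measurableSet_Ioi] with r hr
    rw [norm_mul, Complex.norm_exp, Complex.norm_real, Real.norm_eq_abs,
      abs_of_nonneg (Real.rpow_nonneg (le_of_lt hr) _)]
    simp

/-- The Gamma integral `∫₀^∞ r^{-α} e^{-zr} dr = Γ(1-α) z^{α-1}` for complex `z` in the right
half-plane. Both sides are analytic there and agree on the positive reals. -/
theorem laplace_rpow {α : ℝ} {z : ℂ} (hα1 : α < 1) (hz : 0 < z.re) :
    ∫ r in Ioi (0 : ℝ), ((r ^ (-α) : ℝ) : ℂ) * Complex.exp (-(z * r)) =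
      z ^ ((α : ℂ) - 1) * (Real.Gamma (1 - α) : ℂ) := by
  -- With the weight `r^{-α}` absorbed in the measure, the left side is a complex
  -- moment-generating function, whose analyticity is known.
  let d : ℝ → NNReal := fun r => Real.toNNReal (r ^ (-α))
  have hd : Measurable d := by fun_prop
  let μ : Measure ℝ := (volume.restrict (Ioi 0)).withDensity (fun r => (d r : ENNReal))
  have hμ : ∀ z : ℂ, ProbabilityTheory.complexMGF (fun r : ℝ => -r) μ z =
      ∫ r in Ioi (0 : ℝ), ((r ^ (-α) : ℝ) : ℂ) * Complex.exp (-(z * r)) := by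
    intro z
    rw [ProbabilityTheory.complexMGF, integral_withDensity_eq_integral_smul hd]
    refine setIntegral_congr_fun measurableSet_Ioi fun r hr => ?_
    simp only [d, NNReal.smul_def, Real.coe_toNNReal _ (Real.rpow_nonneg (le_of_lt hr) _)]
    simp
  have hset : Ioi (0 : ℝ) ⊆ interior (ProbabilityTheory.integrableExpSet (fun r : ℝ => -r) μ) := by
    refine interior_maximal ?_ isOpen_Ioi
    intro t ht
    rw [ProbabilityTheory.integrableExpSet, mem_ofPred_eq,
      integrable_withDensity_iff_integrable_smul hd]
    refine (rpow_mul_exp_integrableOn hα1 ht).congr ?_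
    filter_upwards [ae_restrict_mem measurableSet_Ioi] with r hr
    simp only [d, NNReal.smul_def, Real.coe_toNNReal _ (Real.rpow_nonneg (le_of_lt hr) _)]
    simp
  have hopen : IsOpen {z : ℂ | 0 < z.re} := isOpen_lt continuous_const Complex.continuous_re
  have hL : AnalyticOnNhd ℂ (ProbabilityTheory.complexMGF (fun r : ℝ => -r) μ)
      {z : ℂ | 0 < z.re} := fun z hz =>
    ProbabilityTheory.analyticAt_complexMGF (hset hz)
  have hR : AnalyticOnNhd ℂ (fun z : ℂ => z ^ ((α : ℂ) - 1) * (Real.Gamma (1 - α) : ℂ))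
      {z : ℂ | 0 < z.re} := by
    refine DifferentiableOn.analyticOnNhd (fun z hz => ?_) hopen
    exact ((differentiableAt_id.cpow_const (Or.inl hz)).mul_const _).differentiableWithinAt
  have hpre : IsPreconnected {z : ℂ | 0 < z.re} := (convex_halfSpace_re_gt 0).isPreconnected
  have hreal : ∀ t : ℝ, 0 < t → ProbabilityTheory.complexMGF (fun r : ℝ => -r) μ t =
      (t : ℂ) ^ ((α : ℂ) - 1) * (Real.Gamma (1 - α) : ℂ) := by
    intro t ht
    rw [hμ]
    have h1 := Real.integral_rpow_mul_exp_neg_mul_Ioi (a := 1 - α) (r := t) (by linarith) ht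
    have h2 : ∫ r in Ioi (0 : ℝ), ((r ^ (-α) : ℝ) : ℂ) * Complex.exp (-((t : ℂ) * r)) =
        ((∫ r in Ioi (0 : ℝ), r ^ (1 - α - 1) * Real.exp (-(t * r)) : ℝ) : ℂ) := by
      rw [← integral_complex_ofReal]
      refine integral_congr_ae (Eventually.of_forall fun r => ?_)
      simp
    rw [h2, h1, one_div, ← Real.rpow_neg_one t, ← Real.rpow_mul ht.le]
    push_cast [Complex.ofReal_cpow ht.le]
    congr 2
    ring
  have hfreq : ∃ᶠ z in nhdsWithin (1 : ℂ) {1}ᶜ,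
      ProbabilityTheory.complexMGF (fun r : ℝ => -r) μ z =
        z ^ ((α : ℂ) - 1) * (Real.Gamma (1 - α) : ℂ) := by
    have ht : Tendsto (fun t : ℝ => (t : ℂ)) (nhdsWithin 1 {1}ᶜ) (nhdsWithin (1 : ℂ) {1}ᶜ) := by
      refine tendsto_nhdsWithin_iff.2 ⟨?_, ?_⟩
      · exact (Complex.continuous_ofReal.tendsto' 1 1 (by simp)).mono_left nhdsWithin_le_nhds
      · filter_upwards [self_mem_nhdsWithin] with t ht
        simpa using ht
    refine ht.frequently (Eventually.frequently ?_)
    filter_upwards [mem_nhdsWithin_of_mem_nhds (lt_mem_nhds (show (0:ℝ) < 1 by norm_num))]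
      with t ht
    exact hreal t ht
  have := hL.eqOn_of_preconnected_of_frequently_eq hR hpre (show (1:ℂ) ∈ _ by simp) hfreq hz
  rw [← hμ]
  exact this

/-! ### Fubini on a triangle and integration by parts -/

/-- The triangle `0 < p < t ≤ b` in the `(t, p)` plane. -/
def tri (b : ℝ) : Set (ℝ × ℝ) := {q | 0 < q.2 ∧ q.2 < q.1 ∧ q.1 ≤ b}

theorem measurableSet_tri (b : ℝ) : MeasurableSet (tri b) := by
  unfold tri
  measurability

theorem setIntegral_tri {b : ℝ} (hb : 0 ≤ b) {f : ℝ × ℝ → ℂ} (hf : IntegrableOn f (tri b)) :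
    ∫ q in tri b, f q = ∫ t in (0 : ℝ)..b, ∫ p in (0 : ℝ)..t, f (t, p) := by
  rw [← integral_indicator (measurableSet_tri b), Measure.volume_eq_prod,
    integral_prod _ ((integrable_indicator_iff (measurableSet_tri b)).2 hf),
    intervalIntegral.integral_of_le hb, ← integral_indicator measurableSet_Ioc]
  refine integral_congr_ae (Eventually.of_forall fun t => ?_)
  by_cases ht : t ∈ Ioc 0 b
  · simp only [indicator_of_mem ht]
    rw [intervalIntegral.integral_of_le ht.1.le, integral_Ioc_eq_integral_Ioo,
      ← integral_indicator measurableSet_Ioo]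
    refine integral_congr_ae (Eventually.of_forall fun p => ?_)
    have : (t, p) ∈ tri b ↔ p ∈ Ioo 0 t := by
      simp only [tri, mem_ofPred_eq, mem_Ioo]
      exact ⟨fun h => ⟨h.1, h.2.1⟩, fun h => ⟨h.1, h.2, ht.2⟩⟩
    by_cases h : p ∈ Ioo 0 t
    · simp [indicator_of_mem h, indicator_of_mem (this.2 h)]
    · simp [indicator_of_notMem h, indicator_of_notMem (mt this.1 h)]
  · simp only [indicator_of_notMem ht]
    refine integral_eq_zero_of_ae (Eventually.of_forall fun p => ?_)
    refine indicator_of_notMem (fun h => ht ?_) _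
    simp only [tri, mem_ofPred_eq] at h
    exact ⟨h.1.trans h.2.1, h.2.2⟩

/-- Integration over the triangle in the other order: `p` outside, `t` inside. -/
theorem setIntegral_tri_symm {b : ℝ} (hb : 0 ≤ b) {f : ℝ × ℝ → ℂ} (hf : IntegrableOn f (tri b)) :
    ∫ q in tri b, f q = ∫ p in (0 : ℝ)..b, ∫ t in p..b, f (t, p) := by
  rw [← integral_indicator (measurableSet_tri b), Measure.volume_eq_prod,
    integral_prod_symm _ ((integrable_indicator_iff (measurableSet_tri b)).2 hf),
    intervalIntegral.integral_of_le hb, ← integral_indicator measurableSet_Ioc]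
  refine integral_congr_ae (Eventually.of_forall fun p => ?_)
  by_cases hp : p ∈ Ioc 0 b
  · simp only [indicator_of_mem hp]
    rw [intervalIntegral.integral_of_le hp.2, ← integral_indicator measurableSet_Ioc]
    refine integral_congr_ae (Eventually.of_forall fun t => ?_)
    have : (t, p) ∈ tri b ↔ t ∈ Ioc p b := by
      simp only [tri, mem_ofPred_eq, mem_Ioc]
      exact ⟨fun h => h.2, fun h => ⟨hp.1, h⟩⟩
    by_cases h : t ∈ Ioc p b
    · simp [indicator_of_mem h, indicator_of_mem (this.2 h)]
    · simp [indicator_of_notMem h, indicator_of_notMem (mt this.1 h)]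
  · simp only [indicator_of_notMem hp]
    refine integral_eq_zero_of_ae (Eventually.of_forall fun t => ?_)
    refine indicator_of_notMem (fun h => hp ?_) _
    simp only [tri, mem_ofPred_eq] at h
    exact ⟨h.1, h.2.1.le.trans h.2.2⟩

theorem tri_subset (b : ℝ) : tri b ⊆ Ioc 0 b ×ˢ Ioc 0 b := by
  rintro ⟨t, p⟩ ⟨h1, h2, h3⟩
  simp only at h1 h2 h3
  exact ⟨⟨h1.trans h2, h3⟩, ⟨h1, h2.le.trans h3⟩⟩

theorem integrableOn_tri_mul {b : ℝ} {f g : ℝ → ℂ} (hf : IntegrableOn f (Ioc 0 b))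
    (hg : IntegrableOn g (Ioc 0 b)) : IntegrableOn (fun q : ℝ × ℝ => g q.1 * f q.2) (tri b) := by
  have : IntegrableOn (fun q : ℝ × ℝ => g q.1 * f q.2) (Ioc 0 b ×ˢ Ioc 0 b) := by
    rw [IntegrableOn, Measure.volume_eq_prod, ← Measure.prod_restrict]
    exact Integrable.mul_prod hg hf
  exact this.mono_set (tri_subset b)

/-- Integration by parts for primitives of merely integrable functions. It follows from Fubini
on the triangle. -/
theorem integral_primitive_mul {b : ℝ} (hb : 0 ≤ b) {f g : ℝ → ℂ}
    (hf : IntegrableOn f (Ioc 0 b)) (hg : IntegrableOn g (Ioc 0 b)) :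
    (∫ t in (0 : ℝ)..b, (∫ p in (0 : ℝ)..t, f p) * g t) +
      (∫ t in (0 : ℝ)..b, f t * ∫ p in (0 : ℝ)..t, g p) =
      (∫ t in (0 : ℝ)..b, f t) * ∫ t in (0 : ℝ)..b, g t := by
  have hf' : IntervalIntegrable f volume 0 b := (intervalIntegrable_iff_integrableOn_Ioc_of_le hb).2 hf
  have hg' : IntervalIntegrable g volume 0 b := (intervalIntegrable_iff_integrableOn_Ioc_of_le hb).2 hg
  have h1 := setIntegral_tri hb (integrableOn_tri_mul hf hg)
  have h2 := setIntegral_tri_symm hb (integrableOn_tri_mul hf hg)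
  have e1 : ∫ t in (0 : ℝ)..b, (∫ p in (0 : ℝ)..t, f p) * g t =
      ∫ t in (0 : ℝ)..b, ∫ p in (0 : ℝ)..t, g t * f p := by
    refine intervalIntegral.integral_congr fun t _ => ?_
    rw [intervalIntegral.integral_const_mul, mul_comm]
  have hsub : ∀ p ∈ uIcc 0 b, ∫ t in p..b, g t = (∫ t in (0:ℝ)..b, g t) - ∫ t in (0:ℝ)..p, g t := by
    intro p hp
    rw [intervalIntegral.integral_interval_sub_left hg' (hg'.mono_set (uIcc_subset_uIcc_left hp))]
  have e2 : ∫ p in (0 : ℝ)..b, ∫ t in p..b, g t * f p =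
      ∫ p in (0 : ℝ)..b, (f p * (∫ t in (0:ℝ)..b, g t) - f p * ∫ t in (0:ℝ)..p, g t) := by
    refine intervalIntegral.integral_congr fun p hp => ?_
    simp only [intervalIntegral.integral_mul_const, hsub p hp]
    ring
  rw [e1, ← h1, h2, e2, intervalIntegral.integral_sub, intervalIntegral.integral_mul_const]
  · ring
  · exact hf'.mul_const _
  · exact hf'.mul_continuousOn (intervalIntegral.continuousOn_primitive_interval' hg' left_mem_uIcc)

/-! ### The energy estimate for one exponential kernel -/

/-- Positivity of one exponential kernel. With `m = ζ r`, the function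
`Y(t) = ∫₀ᵗ e^{-m(t-p)} w(p) dp` satisfies `∫₀ᵗ w = Y + m G`, where `G = ∫₀ᵗ Y`, hence
`ζ ∫ conj(∫₀ᵗ w) Y = ζ ∫ |Y|² + r |ζ|² ∫ conj(G) G'`, and `Re ∫ conj(G) G' = |G(1)|² / 2`. -/
theorem energy_nonneg {w : ℝ → ℂ} (hw : IntegrableOn w (Ioc 0 1)) {ζ : ℂ} (hζ : 0 < ζ.re)
    {r : ℝ} (hr : 0 < r) :
    0 ≤ (ζ * ∫ t in (0 : ℝ)..1, (starRingEnd ℂ) (∫ p in (0 : ℝ)..t, w p) *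
      ∫ p in (0 : ℝ)..t, Complex.exp (-(ζ * r * ((t - p : ℝ) : ℂ))) * w p).re := by
  set m : ℂ := ζ * r with hm
  have hm0 : m ≠ 0 := by
    refine mul_ne_zero (fun h => ?_) (by exact_mod_cast hr.ne')
    simp [h] at hζ
  let f : ℝ → ℂ := fun p => Complex.exp (m * p) * w p
  let e : ℝ → ℂ := fun p => Complex.exp (-m * p)
  have he : Continuous e := by fun_prop
  have hwI : IntervalIntegrable w volume 0 1 :=
    (intervalIntegrable_iff_integrableOn_Ioc_of_le zero_le_one).2 hw
  have hfI : IntervalIntegrable f volume 0 1 := hwI.continuousOn_mul (by fun_prop)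
  let Y : ℝ → ℂ := fun t => e t * ∫ p in (0 : ℝ)..t, f p
  have hY : ∀ t : ℝ, ∫ p in (0 : ℝ)..t, Complex.exp (-(m * ((t - p : ℝ) : ℂ))) * w p = Y t := by
    intro t
    simp only [Y, ← intervalIntegral.integral_const_mul]
    refine intervalIntegral.integral_congr fun p _ => ?_
    simp only [e, f, ← mul_assoc, ← Complex.exp_add]
    congr 2
    push_cast
    ring
  have hYc : ContinuousOn Y (Icc 0 1) := by
    have := intervalIntegral.continuousOn_primitive_interval' hfI left_mem_uIcc
    rw [uIcc_of_le zero_le_one] at this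
    exact he.continuousOn.mul this
  have hYI : IntervalIntegrable Y volume 0 1 := hYc.intervalIntegrable_of_Icc zero_le_one
  let G : ℝ → ℂ := fun t => ∫ s in (0 : ℝ)..t, Y s
  have hGc : ContinuousOn G (uIcc 0 1) :=
    intervalIntegral.continuousOn_primitive_interval' hYI left_mem_uIcc
  have hint : ∀ s : ℝ, ∫ p in (0 : ℝ)..s, e p = (1 - e s) / m := by
    intro s
    simp only [e]
    rw [integral_exp_mul_complex (neg_ne_zero.2 hm0)]
    simp
    field_simp
    ring
  -- The convolution `Y` solves `Y + m ∫ Y = ∫ w`.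
  have hode : ∀ t ∈ Icc (0 : ℝ) 1, ∫ p in (0 : ℝ)..t, w p = Y t + m * G t := by
    intro t ht
    have hsub : uIcc 0 t ⊆ uIcc (0 : ℝ) 1 := by
      rw [uIcc_of_le ht.1, uIcc_of_le zero_le_one]
      exact Icc_subset_Icc_right ht.2
    have hfI' := hfI.mono_set hsub
    have hwI' := hwI.mono_set hsub
    have h := integral_primitive_mul ht.1
      ((intervalIntegrable_iff_integrableOn_Ioc_of_le ht.1).1 hfI')
      ((intervalIntegrable_iff_integrableOn_Ioc_of_le ht.1).1 (he.intervalIntegrable 0 t))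
    have h1 : ∫ s in (0 : ℝ)..t, (∫ p in (0 : ℝ)..s, f p) * e s = G t := by
      simp only [G, Y, mul_comm]
    have h2 : ∫ s in (0 : ℝ)..t, f s * ∫ p in (0 : ℝ)..s, e p =
        ((∫ s in (0 : ℝ)..t, f s) - ∫ s in (0 : ℝ)..t, w s) / m := by
      rw [← intervalIntegral.integral_sub hfI' hwI', ← intervalIntegral.integral_div]
      refine intervalIntegral.integral_congr fun s _ => ?_
      simp only [hint]
      have : f s * e s = w s := by
        simp only [f, e]
        rw [mul_right_comm, ← Complex.exp_add]
        simp
      field_simp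
      rw [mul_sub, this, mul_one]
    rw [h1, h2, hint] at h
    field_simp at h
    simp only [Y]
    linear_combination -h
  set X : ℂ := ∫ t in (0 : ℝ)..1, (starRingEnd ℂ) (G t) * Y t with hX
  have hXre : 0 ≤ X.re := by
    have h := integral_primitive_mul zero_le_one (f := fun t => (starRingEnd ℂ) (Y t)) (g := Y)
      (((intervalIntegrable_iff_integrableOn_Ioc_of_le zero_le_one).1
        (hYc.star.intervalIntegrable_of_Icc zero_le_one)))
      ((intervalIntegrable_iff_integrableOn_Ioc_of_le zero_le_one).1 hYI)
    simp only [intervalIntegral.intervalIntegral_conj] at h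
    have h2 : ∫ t in (0 : ℝ)..1, (starRingEnd ℂ) (Y t) * ∫ p in (0 : ℝ)..t, Y p =
        (starRingEnd ℂ) X := by
      rw [hX, ← intervalIntegral.intervalIntegral_conj]
      refine intervalIntegral.integral_congr fun t _ => ?_
      simp [G, mul_comm]
    have h1 : ∫ t in (0 : ℝ)..1, (starRingEnd ℂ) (∫ p in (0 : ℝ)..t, Y p) * Y t = X := rfl
    rw [h1, h2, Complex.add_conj, mul_comm ((starRingEnd ℂ) _), Complex.mul_conj] at h
    have h3 : 2 * X.re = Complex.normSq (∫ t in (0 : ℝ)..1, Y t) := by exact_mod_cast h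
    have := Complex.normSq_nonneg (∫ t in (0 : ℝ)..1, Y t)
    linarith
  have hmain : ∫ t in (0 : ℝ)..1, (starRingEnd ℂ) (∫ p in (0 : ℝ)..t, w p) *
      ∫ p in (0 : ℝ)..t, Complex.exp (-(m * ((t - p : ℝ) : ℂ))) * w p =
      ((∫ t in (0 : ℝ)..1, Complex.normSq (Y t) : ℝ) : ℂ) + (starRingEnd ℂ) m * X := by
    rw [hX, ← intervalIntegral.integral_ofReal, ← intervalIntegral.integral_const_mul,
      ← intervalIntegral.integral_add]
    · refine intervalIntegral.integral_congr fun t ht => ?_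
      rw [uIcc_of_le zero_le_one] at ht
      simp only [hY, hode t ht, map_add, map_mul, ← Complex.mul_conj]
      ring
    · refine ContinuousOn.intervalIntegrable_of_Icc zero_le_one ?_
      exact Complex.continuous_ofReal.comp_continuousOn
        (Complex.continuous_normSq.comp_continuousOn hYc)
    · rw [uIcc_of_le zero_le_one] at hGc
      exact ContinuousOn.intervalIntegrable_of_Icc zero_le_one
        (continuousOn_const.mul (hGc.star.mul hYc))
  have hn : 0 ≤ ∫ t in (0 : ℝ)..1, Complex.normSq (Y t) :=
    intervalIntegral.integral_nonneg zero_le_one fun t _ => Complex.normSq_nonneg _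
  have hζm : ζ * (starRingEnd ℂ) m = ((r * Complex.normSq ζ : ℝ) : ℂ) := by
    rw [hm, map_mul, Complex.conj_ofReal, ← mul_assoc, Complex.mul_conj]
    push_cast
    ring
  rw [hmain, mul_add, ← mul_assoc, hζm, Complex.add_re, Complex.re_mul_ofReal, Complex.re_ofReal_mul]
  have := Complex.normSq_nonneg ζ
  positivity

/-! ### Sectoriality of the fractional pairing -/

/-- No integrability is needed: the integral of a non-integrable function is `0`. -/
theorem re_integral_nonneg {X : Type*} [MeasurableSpace X] {μ : Measure X} {f : X → ℂ}
    (hf : ∀ᵐ x ∂μ, 0 ≤ (f x).re) : 0 ≤ (∫ x, f x ∂μ).re := by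
  by_cases h : Integrable f μ
  · have := integral_re (𝕜 := ℂ) h
    simp only [RCLike.re_eq_complex_re] at this
    rw [← this]
    exact integral_nonneg_of_ae hf
  · simp [integral_undef h]

/-- Absolute integrability over the triangle of the weakly singular kernel `(t-p)^{α-1}` against
a bounded function of `t` and an integrable function of `p`; this is the integrability of the
integrand of a convolution of two `L¹` functions. -/
theorem integrableOn_tri_kernel {α : ℝ} (hα0 : 0 < α) {w W : ℝ → ℂ} (hw : IntegrableOn w (Ioc 0 1))
    (hW : AEStronglyMeasurable W (volume.restrict (Ioc 0 1))) {C : ℝ}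
    (hC : ∀ t ∈ Ioc (0 : ℝ) 1, ‖W t‖ ≤ C) :
    IntegrableOn (fun q : ℝ × ℝ => W q.1 * w q.2 * (((q.1 - q.2) ^ (α - 1) : ℝ) : ℂ)) (tri 1) := by
  have hk : Integrable ((Ioc (0 : ℝ) 1).indicator fun s : ℝ => ((s ^ (α - 1) : ℝ) : ℂ)) := by
    rw [integrable_indicator_iff measurableSet_Ioc]
    have := intervalIntegral.intervalIntegrable_rpow' (a := 0) (b := 1) (r := α - 1) (by linarith)
    exact ((intervalIntegrable_iff_integrableOn_Ioc_of_le zero_le_one).1 this).ofReal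
  have h := (((integrable_indicator_iff measurableSet_Ioc).2 hw).convolution_integrand
    (ContinuousLinearMap.mul ℂ ℂ) hk).integrableOn (s := Ioc 0 1 ×ˢ Ioc 0 1)
  have hWm : AEStronglyMeasurable (fun q : ℝ × ℝ => W q.1)
      ((volume.prod volume).restrict (Ioc (0 : ℝ) 1 ×ˢ Ioc (0 : ℝ) 1)) := by
    rw [← Measure.prod_restrict]
    exact hW.comp_fst
  have h2 := (Integrable.bdd_mul (c := C) h hWm (by
    filter_upwards [ae_restrict_mem (measurableSet_Ioc.prod measurableSet_Ioc)] with q hq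
    exact hC _ hq.1))
  have h3 := IntegrableOn.mono_set (μ := volume.prod volume) h2 (tri_subset 1)
  refine IntegrableOn.congr_fun h3 (fun q hq => ?_) (measurableSet_tri 1)
  have hq' := tri_subset 1 hq
  have hq2 : q.1 - q.2 ∈ Ioc (0 : ℝ) 1 :=
    ⟨sub_pos.2 hq.2.1, by linarith [hq.1, hq.2.2]⟩
  simp only [indicator_of_mem hq'.2, indicator_of_mem hq2, ContinuousLinearMap.mul_apply']
  ring

theorem fracInt_pairing {α : ℝ} (hα0 : 0 < α) (w W : ℝ → ℂ) :
    ∫ t in (0 : ℝ)..1, W t * fracInt α w t = ((Real.Gamma α)⁻¹ : ℝ) *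
      ∫ t in (0 : ℝ)..1, ∫ p in (0 : ℝ)..t, W t * w p * (((t - p) ^ (α - 1) : ℝ) : ℂ) := by
  rw [← intervalIntegral.integral_const_mul]
  refine intervalIntegral.integral_congr fun t _ => ?_
  simp only [fracInt, if_neg hα0.ne', mul_assoc, Complex.real_smul,
    intervalIntegral.integral_const_mul]
  rw [mul_left_comm]
  simp only [mul_comm (w _)]

/-- The sectoriality of `⟨I¹w, I^α w⟩`: after multiplication by `e^{iφα}`, with `|φ| < π/2`, it has
nonnegative real part. The kernel of `I^α` is a superposition of exponentials `e^{-ζrt}`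
along the rotated ray with direction `ζ = e^{iφ}`, and each exponential is handled by `energy_nonneg`. -/
theorem rotated_pairing_nonneg {α φ : ℝ} (hα0 : 0 < α) (hα1 : α < 1) (hφ : |φ| < Real.pi / 2)
    {w : ℝ → ℂ} (hw : IntegrableOn w (Ioc 0 1)) :
    0 ≤ (Complex.exp ((φ * α : ℝ) * Complex.I) *
      ∫ t in (0 : ℝ)..1, (starRingEnd ℂ) (∫ p in (0 : ℝ)..t, w p) * fracInt α w t).re := by
  set ζ : ℂ := Complex.exp (φ * Complex.I) with hζdef
  have hζ : 0 < ζ.re := by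
    rw [hζdef, Complex.exp_ofReal_mul_I_re]
    exact Real.cos_pos_of_mem_Ioo (abs_lt.1 hφ |>.imp (by intro h; linarith) id)
  have hζ0 : ζ ≠ 0 := Complex.exp_ne_zero _
  let W : ℝ → ℂ := fun t => (starRingEnd ℂ) (∫ p in (0 : ℝ)..t, w p)
  have hwI : IntervalIntegrable w volume 0 1 :=
    (intervalIntegrable_iff_integrableOn_Ioc_of_le zero_le_one).2 hw
  have hWc : ContinuousOn W (Icc 0 1) := by
    have := intervalIntegral.continuousOn_primitive_interval' hwI left_mem_uIcc
    rw [uIcc_of_le zero_le_one] at this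
    exact this.star
  obtain ⟨C, hC⟩ := isCompact_Icc.exists_bound_of_continuousOn hWc
  have hWm : AEStronglyMeasurable W (volume.restrict (Ioc 0 1)) :=
    (hWc.mono Ioc_subset_Icc_self).aestronglyMeasurable measurableSet_Ioc
  have hWI : IntegrableOn W (Ioc 0 1) :=
    (hWc.integrableOn_Icc).mono_set Ioc_subset_Icc_self
  have hk := integrableOn_tri_kernel hα0 hw hWm (fun t ht => hC t (Ioc_subset_Icc_self ht))
  let h : ℝ × ℝ → ℂ := fun q => W q.1 * w q.2
  have hh : IntegrableOn h (tri 1) := integrableOn_tri_mul hw hWI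
  let F : ℝ × ℝ → ℝ → ℂ := fun q r =>
    h q * (((r ^ (-α) : ℝ) : ℂ) * Complex.exp (-(ζ * ((q.1 - q.2 : ℝ) : ℂ) * r)))
  have hre : ∀ q ∈ tri 1, 0 < (ζ * ((q.1 - q.2 : ℝ) : ℂ)).re := by
    intro q hq
    rw [Complex.re_mul_ofReal]
    exact mul_pos hζ (sub_pos.2 hq.2.1)
  have hFm : AEStronglyMeasurable (Function.uncurry F)
      ((volume.restrict (tri 1)).prod (volume.restrict (Ioi 0))) := by
    refine (hh.1.comp_fst).mul (Measurable.aestronglyMeasurable ?_)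
    fun_prop
  have hFint : Integrable (Function.uncurry F)
      ((volume.restrict (tri 1)).prod (volume.restrict (Ioi 0))) := by
    rw [integrable_prod_iff hFm]
    refine ⟨?_, ?_⟩
    · filter_upwards [ae_restrict_mem (measurableSet_tri 1)] with q hq
      exact (rpow_mul_cexp_integrableOn hα1 (hre q hq)).const_mul (h q)
    · refine Integrable.congr (hk.norm.const_mul (ζ.re ^ (α - 1) * Real.Gamma (1 - α))) ?_
      filter_upwards [ae_restrict_mem (measurableSet_tri 1)] with q hq
      have hτ : 0 < q.1 - q.2 := sub_pos.2 hq.2.1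
      have e1 : ∫ r in Ioi (0 : ℝ), ‖F q r‖ = ‖h q‖ *
          ∫ r in Ioi (0 : ℝ), r ^ (1 - α - 1) * Real.exp (-(ζ.re * (q.1 - q.2) * r)) := by
        rw [← integral_const_mul]
        refine setIntegral_congr_fun measurableSet_Ioi fun r hr => ?_
        simp only [F]
        rw [norm_mul, norm_mul (_ : ℂ) (Complex.exp _), Complex.norm_exp, Complex.norm_real, Real.norm_eq_abs,
          abs_of_nonneg (Real.rpow_nonneg (le_of_lt hr) _)]
        simp
      simp only [Function.uncurry_apply_pair]
      rw [e1, Real.integral_rpow_mul_exp_neg_mul_Ioi (by linarith) (mul_pos hζ hτ), norm_mul,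
        Complex.norm_real, Real.norm_eq_abs, abs_of_nonneg (Real.rpow_nonneg hτ.le _),
        one_div, ← Real.rpow_neg_one, ← Real.rpow_mul (mul_pos hζ hτ).le,
        Real.mul_rpow hζ.le hτ.le]
      simp only [h]
      ring_nf
  -- Fubini: integrating first in `r` gives the kernel `(t-p)^{α-1}`, integrating first over the
  -- triangle gives the pairing with a single exponential kernel.
  have hswap := integral_integral_swap hFint
  have hL : ∫ q in tri 1, ∫ r in Ioi (0 : ℝ), F q r =
      ζ ^ ((α : ℂ) - 1) * (Real.Gamma (1 - α) : ℂ) *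
        ∫ t in (0 : ℝ)..1, ∫ p in (0 : ℝ)..t, W t * w p * (((t - p) ^ (α - 1) : ℝ) : ℂ) := by
    rw [← setIntegral_tri zero_le_one hk, ← integral_const_mul]
    refine setIntegral_congr_fun (measurableSet_tri 1) fun q hq => ?_
    have hτ : 0 < q.1 - q.2 := sub_pos.2 hq.2.1
    simp only [F]
    rw [integral_const_mul, laplace_rpow hα1 (hre q hq), Complex.cpow_def_of_ne_zero
      (mul_ne_zero hζ0 (by exact_mod_cast hτ.ne')), Complex.log_mul_ofReal _ hτ _ hζ0,
      Complex.cpow_def_of_ne_zero hζ0, Real.rpow_def_of_pos hτ, add_mul, Complex.exp_add]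
    push_cast
    ring
  have hR : ∀ r ∈ Ioi (0 : ℝ), 0 ≤ (ζ * ∫ q in tri 1, F q r).re := by
    intro r hr
    have hr0 : (0 : ℝ) < r := hr
    have hi : IntegrableOn
        (fun q : ℝ × ℝ => h q * Complex.exp (-(ζ * r * ((q.1 - q.2 : ℝ) : ℂ)))) (tri 1) := by
      refine Integrable.mul_bdd (c := 1) hh (Measurable.aestronglyMeasurable (by fun_prop)) ?_
      filter_upwards [ae_restrict_mem (measurableSet_tri 1)] with q hq
      have := (hre q hq).le
      rw [Complex.norm_exp, Real.exp_le_one_iff, mul_right_comm, Complex.neg_re,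
        Complex.re_mul_ofReal]
      nlinarith
    have e : ∫ q in tri 1, F q r = ((r ^ (-α) : ℝ) : ℂ) *
        ∫ t in (0 : ℝ)..1, W t *
          ∫ p in (0 : ℝ)..t, Complex.exp (-(ζ * r * ((t - p : ℝ) : ℂ))) * w p := by
      have e2 := setIntegral_tri zero_le_one hi
      simp only [h, mul_assoc, intervalIntegral.integral_const_mul] at e2
      simp only [mul_assoc, mul_comm (Complex.exp _)]
      rw [← e2, ← integral_const_mul]
      refine setIntegral_congr_fun (measurableSet_tri 1) fun q hq => ?_
      simp only [F, h]
      ring_nf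
    rw [e, mul_left_comm, Complex.re_ofReal_mul]
    exact mul_nonneg (Real.rpow_nonneg hr0.le _) (energy_nonneg hw hζ hr0)
  have hpos : 0 ≤ (ζ * ∫ q in tri 1, ∫ r in Ioi (0 : ℝ), F q r).re := by
    rw [hswap, ← integral_const_mul]
    refine re_integral_nonneg ?_
    filter_upwards [ae_restrict_mem measurableSet_Ioi] with r hr using hR r hr
  have hζα : ζ * ζ ^ ((α : ℂ) - 1) = Complex.exp ((φ * α : ℝ) * Complex.I) := by
    have hlog : Complex.log ζ = φ * Complex.I := by
      have := abs_lt.1 hφ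
      rw [hζdef, Complex.log_exp] <;> simp <;> linarith [Real.pi_pos]
    rw [Complex.cpow_def_of_ne_zero hζ0, hlog, hζdef, ← Complex.exp_add]
    congr 1
    push_cast
    ring
  rw [hL, ← mul_assoc, ← mul_assoc, hζα, mul_right_comm, mul_comm, Complex.re_ofReal_mul] at hpos
  have hΓ := Real.Gamma_pos_of_pos (show 0 < 1 - α by linarith)
  have hΓ2 := Real.Gamma_pos_of_pos hα0
  rw [fracInt_pairing hα0 w W, mul_left_comm, Complex.re_ofReal_mul]
  exact mul_nonneg (inv_nonneg.2 hΓ2.le) (nonneg_of_mul_nonneg_right hpos hΓ)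

/-! ### From the numerical range to the resolvent -/

theorem memLp_iff_sqIntOn {f : ℝ → ℂ} :
    SqIntOn f ↔ MemLp f 2 (volume.restrict (Ioc (0 : ℝ) 1)) :=
  ⟨fun h => (memLp_two_iff_integrable_sq_norm h.1).2 h.2,
    fun h => ⟨h.1, (memLp_two_iff_integrable_sq_norm h.1).1 h⟩⟩

theorem norm_integral_conj_mul_le {f g : ℝ → ℂ}
    (hf : MemLp f 2 (volume.restrict (Ioc (0 : ℝ) 1)))
    (hg : MemLp g 2 (volume.restrict (Ioc (0 : ℝ) 1))) :
    ‖∫ t in (0 : ℝ)..1, (starRingEnd ℂ) (f t) * g t‖ ≤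
      Real.sqrt (L2normSq f) * Real.sqrt (L2normSq g) := by
  have h := integral_mul_le_Lp_mul_Lq_of_nonneg (μ := volume.restrict (Ioc (0 : ℝ) 1))
    (f := fun t => ‖f t‖) (g := fun t => ‖g t‖) Real.HolderConjugate.two_two
    (Eventually.of_forall fun t => norm_nonneg _) (Eventually.of_forall fun t => norm_nonneg _)
    (by simpa using hf.norm) (by simpa using hg.norm)
  simp only [Real.rpow_two, ← Real.sqrt_eq_rpow] at h
  simp only [L2normSq, intervalIntegral.integral_of_le zero_le_one]
  refine (norm_integral_le_integral_norm _).trans (le_trans (le_of_eq ?_) h)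
  simp

/-- For `(u, w)` in the graph of `A`, integration by parts identifies the numerical range
value `⟨w, u⟩` with minus the pairing of the primitive of `w` with `I^α w`. -/
theorem graph_pairing {α : ℝ} {u w : ℝ → ℂ} (h : InGraphA α u w) :
    ∫ t in (0 : ℝ)..1, (starRingEnd ℂ) (w t) * u t =
      -∫ t in (0 : ℝ)..1, (starRingEnd ℂ) (∫ p in (0 : ℝ)..t, w p) * fracInt α w t := by
  obtain ⟨hu1, hw, hv, hu⟩ := h
  have hwI : IntegrableOn w (Ioc 0 1) := (memLp_iff_sqIntOn.1 hw).integrable one_le_two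
  have hcI : IntegrableOn (fun t => (starRingEnd ℂ) (w t)) (Ioc 0 1) :=
    (LinearIsometryEquiv.integrable_comp_iff Complex.conjLIE).2 hwI
  have hcI' := (intervalIntegrable_iff_integrableOn_Ioc_of_le zero_le_one).2 hcI
  have hibp := integral_primitive_mul zero_le_one hcI
    ((intervalIntegrable_iff_integrableOn_Ioc_of_le zero_le_one).1 hv)
  simp only [intervalIntegral.intervalIntegral_conj] at hibp
  have hu0 := hu 1 (by simp)
  rw [hu1] at hu0
  have e : ∫ t in (0 : ℝ)..1, (starRingEnd ℂ) (w t) * u t = ∫ t in (0 : ℝ)..1,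
      ((starRingEnd ℂ) (w t) * u 0 + (starRingEnd ℂ) (w t) * ∫ s in (0 : ℝ)..t, fracInt α w s) := by
    refine intervalIntegral.integral_congr fun t ht => ?_
    rw [uIcc_of_le zero_le_one] at ht
    simp only [hu t ht, mul_add]
  rw [e, intervalIntegral.integral_add (hcI'.mul_const _)
    (hcI'.mul_continuousOn (intervalIntegral.continuousOn_primitive_interval' hv left_mem_uIcc)),
    intervalIntegral.integral_mul_const, intervalIntegral.intervalIntegral_conj]
  linear_combination hibp - (starRingEnd ℂ) (∫ t in (0 : ℝ)..1, w t) * hu0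

theorem graph_memLp {α : ℝ} {u w : ℝ → ℂ} (h : InGraphA α u w) :
    MemLp u 2 (volume.restrict (Ioc (0 : ℝ) 1)) := by
  obtain ⟨-, -, hv, hu⟩ := h
  have hc : ContinuousOn u (Icc 0 1) := by
    have := intervalIntegral.continuousOn_primitive_interval' hv left_mem_uIcc
    rw [uIcc_of_le zero_le_one] at this
    exact (continuousOn_const.add this).congr hu
  refine memLp_iff_sqIntOn.1 ⟨(hc.mono Ioc_subset_Icc_self).aestronglyMeasurable
    measurableSet_Ioc, ?_⟩
  exact (ContinuousOn.integrableOn_Icc (hc.norm.pow 2)).mono_set Ioc_subset_Icc_self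

/-- A rotation `θ` for which `e^{iθ} ⟨I¹w, I^α w⟩` has nonnegative real part turns into a
resolvent bound at `lam`, with constant the cosine of the angle between `lam` and `e^{iθ}`. -/
theorem resolvent_of_rotation {α θ c : ℝ} {u w : ℝ → ℂ} (h : InGraphA α u w) {lam : ℂ}
    (hrot : 0 ≤ (Complex.exp ((θ : ℝ) * Complex.I) * ∫ t in (0 : ℝ)..1,
      (starRingEnd ℂ) (∫ p in (0 : ℝ)..t, w p) * fracInt α w t).re)
    (hc : c ≤ Real.cos (lam.arg - θ)) :
    c * ‖lam‖ * Real.sqrt (L2normSq u) ≤ Real.sqrt (L2normSq (fun x => lam * u x - w x)) := by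
  have hu := graph_memLp h
  have hw := memLp_iff_sqIntOn.1 h.2.1
  have hpair := graph_pairing h
  have hs : 0 ≤ L2normSq u := intervalIntegral.integral_nonneg zero_le_one fun t _ => by positivity
  have hCS := norm_integral_conj_mul_le ((hu.const_mul lam).sub hw) hu
  set z : ℂ := ∫ t in (0 : ℝ)..1,
      (starRingEnd ℂ) (∫ p in (0 : ℝ)..t, w p) * fracInt α w t with hz
  have hI1 : IntervalIntegrable (fun t => ((‖u t‖ ^ 2 : ℝ) : ℂ)) volume 0 1 :=
    (intervalIntegrable_iff_integrableOn_Ioc_of_le zero_le_one).2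
      (memLp_iff_sqIntOn.2 hu).2.ofReal
  have hI2 : IntervalIntegrable (fun t => (starRingEnd ℂ) (w t) * u t) volume 0 1 :=
    (intervalIntegrable_iff_integrableOn_Ioc_of_le zero_le_one).2 (hw.star.integrable_mul hu)
  have hexp : ∫ t in (0 : ℝ)..1, (starRingEnd ℂ) (lam * u t - w t) * u t =
      (starRingEnd ℂ) lam * (L2normSq u : ℂ) + z := by
    rw [L2normSq, ← intervalIntegral.integral_ofReal, ← intervalIntegral.integral_const_mul,
      eq_comm, ← neg_eq_iff_eq_neg.2 hpair, ← sub_eq_add_neg,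
      ← intervalIntegral.integral_sub (hI1.const_mul _) hI2]
    refine intervalIntegral.integral_congr fun t _ => ?_
    have : ((‖u t‖ ^ 2 : ℝ) : ℂ) = (starRingEnd ℂ) (u t) * u t := by
      rw [mul_comm, Complex.mul_conj, Complex.normSq_eq_norm_sq]
    simp only [this, map_sub, map_mul]
    ring
  have hlam : (Complex.exp (θ * Complex.I) * (starRingEnd ℂ) lam).re =
      ‖lam‖ * Real.cos (lam.arg - θ) := by
    rw [Complex.mul_re, Complex.exp_ofReal_mul_I_re, Complex.exp_ofReal_mul_I_im, Complex.conj_re,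
      Complex.conj_im, Real.cos_sub, mul_add, ← mul_assoc, ← mul_assoc, Complex.norm_mul_cos_arg,
      Complex.norm_mul_sin_arg]
    ring
  have hmain : c * ‖lam‖ * L2normSq u ≤
      Real.sqrt (L2normSq (fun x => lam * u x - w x)) * Real.sqrt (L2normSq u) :=
    calc c * ‖lam‖ * L2normSq u ≤ ‖lam‖ * Real.cos (lam.arg - θ) * L2normSq u := by
          rw [mul_comm c]
          gcongr
      _ ≤ (Complex.exp (θ * Complex.I) * ((starRingEnd ℂ) lam * (L2normSq u : ℂ) + z)).re := by
          rw [mul_add, ← mul_assoc, Complex.add_re, Complex.re_mul_ofReal, hlam]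
          linarith
      _ ≤ ‖Complex.exp (θ * Complex.I) * ((starRingEnd ℂ) lam * (L2normSq u : ℂ) + z)‖ :=
          Complex.re_le_norm _
      _ = ‖∫ t in (0 : ℝ)..1, (starRingEnd ℂ) (lam * u t - w t) * u t‖ := by
          rw [norm_mul, Complex.norm_exp_ofReal_mul_I, one_mul, hexp]
      _ ≤ _ := hCS
  rcases hs.eq_or_lt with h0 | h0
  · rw [← h0]
    simp
  · refine le_of_mul_le_mul_right ?_ (Real.sqrt_pos.2 h0)
    rwa [mul_assoc, Real.mul_self_sqrt hs]

/-- the sectorial resolvent estimate for A = (d/dx)D^a: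
there are nu in (0, pi/2) and c > 0 with c |lam| |u|_{L2} <= |lam u - A u|_{L2}
for all lam with |arg lam| < pi - nu. -/
theorem statement_6 (α : ℝ) (hα : α ∈ Set.Ioo (0:ℝ) 1) :
    ∃ ν ∈ Set.Ioo (0:ℝ) (Real.pi / 2), ∃ c > (0:ℝ),
      ∀ lam : ℂ, lam ≠ 0 → |lam.arg| < Real.pi - ν →
        ∀ u w : ℝ → ℂ, InGraphA α u w →
          c * ‖lam‖ * Real.sqrt (L2normSq u) ≤
            Real.sqrt (L2normSq (fun x => lam * u x - w x)) := by
  obtain ⟨hα0, hα1⟩ := hα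
  have hπ := Real.pi_pos
  -- The numerical range of `-A` lies in the sector of half-angle `π/2 - ψ`. Taking `ν = π/2 - ψ/2`
  -- leaves a margin of `ψ/2`.
  set ψ : ℝ := Real.pi / 4 * α with hψ
  have hψ0 : 0 < ψ := by positivity
  have hψ1 : ψ < Real.pi / 4 := by nlinarith
  refine ⟨Real.pi / 2 - ψ / 2, ⟨by linarith, by linarith⟩, Real.cos (Real.pi / 2 - ψ / 2),
    Real.cos_pos_of_mem_Ioo ⟨by linarith, by linarith⟩, ?_⟩
  intro lam _ harg u w h
  have hw : IntegrableOn w (Ioc 0 1) := (memLp_iff_sqIntOn.1 h.2.1).integrable one_le_two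
  have hcos : ∀ x : ℝ, |x| ≤ Real.pi / 2 - ψ / 2 →
      Real.cos (Real.pi / 2 - ψ / 2) ≤ Real.cos x := by
    intro x hx
    rw [← Real.cos_abs x]
    exact Real.cos_le_cos_of_nonneg_of_le_pi (abs_nonneg _) (by linarith) hx
  -- The rotation angle `±ψ` is taken with the sign of `arg lam`, so that `lam` makes an angle of at
  -- most `π/2 - ψ/2` with it.
  rcases le_total 0 lam.arg with hs | hs
  · rw [abs_of_nonneg hs] at harg
    refine resolvent_of_rotation h (rotated_pairing_nonneg (φ := Real.pi / 4) hα0 hα1 ?_ hw)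
      (hcos _ (abs_le.2 ⟨by linarith, by linarith⟩))
    rw [abs_of_pos (by positivity)]
    linarith
  · rw [abs_of_nonpos hs] at harg
    refine resolvent_of_rotation h (rotated_pairing_nonneg (φ := -(Real.pi / 4)) hα0 hα1 ?_ hw)
      (hcos _ (abs_le.2 ⟨by linarith, by linarith⟩))
    rw [abs_neg, abs_of_pos (by positivity)]
    linarith
end

section
/- Let α ∈ (0,1). For every ε > 0 there exists a constant c(ε) > 0 such that for every pair (u,w) in the graph of the operator A = (d/dx)D^α one has ‖D^α u‖_{L²(0,1)} ≤ ε N_{(1+α)/2}(u) + c(ε) ‖u‖_{L²(0,1)}, where D^α u = I^{1−α}u′, i.e. (D^α u)(x) = ∫₀ˣ w(s) ds. -/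
/-!
The estimate is interpolation between a weaker Gagliardo seminorm and `L²`, once `D^α u` is
controlled by a seminorm of order strictly below `(1 + α) / 2`.

Let `v = D^α u = I¹w` and `f = u' = I^α w`. The semigroup law gives
`Γ(1-α) v(x) = ∫₀ˣ (x - t)^(-α) f(t) dt`. Integrating by parts as in Marchaud's formula replaces
`f` by differences of `u`, but leaves the boundary term `x^(-α) (u x - u 0)`, which contains the
point value of `u` at `0`. Hardy's identity `1 = t / x + t ∫ₜˣ r⁻² dr` turns it into averages of
`u r - u p` over `p < r` (`marchaud_repr`). Cauchy–Schwarz then bounds `‖v‖²` by a constant times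
`∬ |u x - u y|² |x - y|^(-β)` with `β = 2 + α²` (`marchaud_estimate`). Any
`β > max(2, 1 + 2α)` would do here, and this one also satisfies `β < 2 + α`, the exponent of the
order `(1 + α) / 2`. Since `r^(-β) ≤ η r^(-(2+α)) + K(η)` for all `r > 0`, the estimate follows
with arbitrarily small `η` (`gag_interp`).

The seminorm in the statement is a Bochner integral, whose value is `0` when it diverges, so its
convergence has to be proved. With `w ∈ L²`, the function `u = u(0) + I^(1+α) w` satisfies
`|u y - u x|² ≤ H |y - x|^(1+2α-α²)` (`holder_increment`), and `1 + 2α - α² > 1 + α` makes the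
double integral finite (`sobSeminormSq_eq`). The lemma `graph_core` collects what membership in
the graph provides. The work on integrals is done in `[0,∞]`.
-/

open MeasureTheory Set Filter

/-! ### Beta integrals, Fubini and Cauchy–Schwarz -/

lemma beta_scaled {a b h : ℝ} (ha : 0 < a) (hb : 0 < b) (hh : 0 < h) :
    ∫ t in (0:ℝ)..h, t ^ (a - 1) * (h - t) ^ (b - 1) =
      h ^ (a + b - 1) * ProbabilityTheory.beta a b := by
  have h1 := Complex.betaIntegral_scaled (a : ℂ) (b : ℂ) hh
  have h2 : Complex.betaIntegral a b = (ProbabilityTheory.beta a b : ℂ) := by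
    rw [Complex.betaIntegral_eq_Gamma_mul_div]
    · simp_rw [ProbabilityTheory.beta, ← Complex.ofReal_add a b, Complex.Gamma_ofReal]
      norm_cast
    all_goals simpa
  rw [h2] at h1
  apply Complex.ofReal_injective
  rw [← intervalIntegral.integral_ofReal]
  push_cast
  rw [Complex.ofReal_cpow hh.le]
  push_cast
  rw [← h1]
  refine intervalIntegral.integral_congr fun t ht => ?_
  rw [uIcc_of_le hh.le] at ht
  rw [Complex.ofReal_cpow ht.1, Complex.ofReal_cpow (sub_nonneg.2 ht.2)]
  push_cast
  rfl

lemma beta_interval {a b q x : ℝ} (ha : 0 < a) (hb : 0 < b) (hqx : q < x) :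
    ∫ t in q..x, (x - t) ^ (a - 1) * (t - q) ^ (b - 1) =
      (x - q) ^ (a + b - 1) * ProbabilityTheory.beta a b := by
  rw [← beta_scaled ha hb (sub_pos.2 hqx)]
  have := intervalIntegral.integral_comp_sub_left (a := q) (b := x)
    (fun r => r ^ (a - 1) * (x - q - r) ^ (b - 1)) x
  rw [sub_self] at this
  rw [← this]
  refine intervalIntegral.integral_congr fun t ht => ?_
  congr 2
  ring

/-- The integrability is read off the nonzero value of the integral. -/
lemma beta_integrable {a b q x : ℝ} (ha : 0 < a) (hb : 0 < b) (hqx : q < x) :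
    IntervalIntegrable (fun t => (x - t) ^ (a - 1) * (t - q) ^ (b - 1)) volume q x := by
  by_contra hcon
  have h1 := beta_interval ha hb hqx
  rw [intervalIntegral.integral_undef hcon] at h1
  have := mul_pos (Real.rpow_pos_of_pos (sub_pos.2 hqx) (a + b - 1))
    (ProbabilityTheory.beta_pos ha hb)
  linarith

/-- Fubini for a nonnegative kernel `K` against a function `g` of the second variable, where
`L` denotes the marginal of `K`. -/
lemma fubini_kernel (x : ℝ) (K : ℝ → ℝ → ℝ) (hK : Measurable (Function.uncurry K))
    (hK0 : ∀ t ∈ Ioo 0 x, ∀ q ∈ Ioo 0 x, 0 ≤ K t q) (g : ℝ → ℂ)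
    (hg : AEStronglyMeasurable g (volume.restrict (Ioo 0 x))) (L : ℝ → ℝ)
    (h1 : ∀ q ∈ Ioo 0 x, IntegrableOn (fun t => K t q) (Ioo 0 x))
    (h2 : ∀ q ∈ Ioo 0 x, ∫ t in Ioo 0 x, K t q = L q)
    (h3 : IntegrableOn (fun q => (L q : ℂ) * g q) (Ioo 0 x)) :
    IntegrableOn (fun t => ∫ q in Ioo 0 x, (K t q : ℂ) * g q) (Ioo 0 x) ∧
    ∫ t in Ioo 0 x, ∫ q in Ioo 0 x, (K t q : ℂ) * g q = ∫ q in Ioo 0 x, (L q : ℂ) * g q := by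
  set μ := volume.restrict (Ioo 0 x) with hμ
  have hmem : ∀ᵐ q ∂μ, q ∈ Ioo 0 x := ae_restrict_mem measurableSet_Ioo
  have hint : Integrable (Function.uncurry fun t q => (K t q : ℂ) * g q) (μ.prod μ) := by
    have hm : AEStronglyMeasurable (Function.uncurry fun t q => (K t q : ℂ) * g q)
        (μ.prod μ) := by
      refine AEStronglyMeasurable.mul ?_ ?_
      · exact (Complex.measurable_ofReal.comp hK).aestronglyMeasurable
      · exact hg.comp_snd
    rw [integrable_prod_iff' hm]
    constructor
    · filter_upwards [hmem] with q hq
      exact ((h1 q hq).ofReal (𝕜 := ℂ)).mul_const (g q)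
    · refine h3.norm.congr ?_
      filter_upwards [hmem] with q hq
      have : ∫ t, ‖(K t q : ℂ) * g q‖ ∂μ = ∫ t, K t q * ‖g q‖ ∂μ := by
        refine integral_congr_ae ?_
        filter_upwards [hmem] with t ht
        rw [norm_mul, Complex.norm_real, Real.norm_of_nonneg (hK0 t ht q hq)]
      have h0 : 0 ≤ L q := by
        rw [← h2 q hq]
        exact setIntegral_nonneg measurableSet_Ioo fun t ht => hK0 t ht q hq
      simp only [Function.uncurry]
      rw [this, integral_mul_const, h2 q hq, norm_mul, Complex.norm_real,
        Real.norm_of_nonneg h0]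
  refine ⟨hint.integral_prod_left, ?_⟩
  rw [integral_integral_swap hint]
  refine integral_congr_ae ?_
  filter_upwards [hmem] with q hq
  rw [integral_mul_const, integral_complex_ofReal, h2 q hq]

lemma lintegral_mul_sq_le {μ : Measure ℝ} {f g : ℝ → ENNReal} (hf : AEMeasurable f μ)
    (hg : AEMeasurable g μ) :
    (∫⁻ t, f t * g t ∂μ) ^ 2 ≤ (∫⁻ t, f t ^ 2 ∂μ) * ∫⁻ t, g t ^ 2 ∂μ := by
  have h := ENNReal.lintegral_mul_le_Lp_mul_Lq μ Real.HolderConjugate.two_two hf hg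
  simp only [Pi.mul_apply, ENNReal.rpow_ofNat] at h
  calc (∫⁻ t, f t * g t ∂μ) ^ 2 ≤ ((∫⁻ t, f t ^ 2 ∂μ) ^ (1 / 2 : ℝ) *
        (∫⁻ t, g t ^ 2 ∂μ) ^ (1 / 2 : ℝ)) ^ 2 := by gcongr
    _ = _ := by
      rw [mul_pow, ← ENNReal.rpow_natCast, ← ENNReal.rpow_natCast, ← ENNReal.rpow_mul,
        ← ENNReal.rpow_mul]
      norm_num

lemma setIntegral_lower {E : Type*} [NormedAddCommGroup E] [NormedSpace ℝ E] {t x : ℝ}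
    (ht : t ∈ Ioo 0 x) (φ : ℝ → E) :
    ∫ q in Ioo 0 x, (if q < t then φ q else 0) = ∫ q in (0:ℝ)..t, φ q := by
  have : (fun q => if q < t then φ q else 0) = (Iio t).indicator φ := by
    ext q; simp [indicator]
  rw [this, setIntegral_indicator measurableSet_Iio, intervalIntegral.integral_of_le ht.1.le,
    integral_Ioc_eq_integral_Ioo]
  congr 2
  ext q; simp; grind

lemma setIntegral_upper {E : Type*} [NormedAddCommGroup E] [NormedSpace ℝ E] {q x : ℝ}
    (hq : q ∈ Ioo 0 x) (φ : ℝ → E) :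
    ∫ t in Ioo 0 x, (if q < t then φ t else 0) = ∫ t in q..x, φ t := by
  have : (fun t => if q < t then φ t else 0) = (Ioi q).indicator φ := by
    ext t; simp [indicator]
  rw [this, setIntegral_indicator measurableSet_Ioi, intervalIntegral.integral_of_le hq.2.le,
    integral_Ioc_eq_integral_Ioo]
  congr 2
  ext t; simp; grind

lemma integrableOn_lower {E : Type*} [NormedAddCommGroup E] {t x : ℝ}
    (ht : t ∈ Ioo 0 x) {φ : ℝ → E} (hφ : IntervalIntegrable φ volume 0 t) :
    IntegrableOn (fun q => if q < t then φ q else 0) (Ioo 0 x) := by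
  have : (fun q => if q < t then φ q else 0) = (Iio t).indicator φ := by
    ext q; simp [indicator]
  rw [this, IntegrableOn, integrable_indicator_iff measurableSet_Iio, IntegrableOn,
    Measure.restrict_restrict measurableSet_Iio]
  refine ((intervalIntegrable_iff_integrableOn_Ioc_of_le ht.1.le).1 hφ).mono_set ?_
  intro q hq
  exact ⟨hq.2.1, le_of_lt hq.1⟩

lemma integrableOn_upper {E : Type*} [NormedAddCommGroup E] {q x : ℝ}
    (hq : q ∈ Ioo 0 x) {φ : ℝ → E} (hφ : IntervalIntegrable φ volume q x) :
    IntegrableOn (fun t => if q < t then φ t else 0) (Ioo 0 x) := by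
  have : (fun t => if q < t then φ t else 0) = (Ioi q).indicator φ := by
    ext t; simp [indicator]
  rw [this, IntegrableOn, integrable_indicator_iff measurableSet_Ioi, IntegrableOn,
    Measure.restrict_restrict measurableSet_Ioi]
  refine ((intervalIntegrable_iff_integrableOn_Ioc_of_le hq.2.le).1 hφ).mono_set ?_
  intro t ht
  exact ⟨ht.1, ht.2.2.le⟩

/-! ### Fractional kernels on a triangle -/

/-- The semigroup law `I^a I^b = I^(a+b)` at `x`, without the Gamma factors, together with the
integrability that makes it meaningful. -/
lemma semigroup_aux {a b x : ℝ} (ha : 0 < a) (hb : 0 < b) (hab : 1 ≤ a + b)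
    {w : ℝ → ℂ} (hw : IntegrableOn w (Ioo 0 x)) :
    IntegrableOn (fun t => (((x - t) ^ (a - 1) : ℝ) : ℂ) *
      ∫ q in (0:ℝ)..t, (((t - q) ^ (b - 1) : ℝ) : ℂ) * w q) (Ioo 0 x) ∧
    ∫ t in Ioo 0 x, (((x - t) ^ (a - 1) : ℝ) : ℂ) *
      ∫ q in (0:ℝ)..t, (((t - q) ^ (b - 1) : ℝ) : ℂ) * w q =
    ∫ q in Ioo 0 x, (((x - q) ^ (a + b - 1) * ProbabilityTheory.beta a b : ℝ) : ℂ) * w q := by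
  have key := fubini_kernel x
    (fun t q => if q < t then (x - t) ^ (a - 1) * (t - q) ^ (b - 1) else 0) ?_ ?_ w hw.1
    (fun q => (x - q) ^ (a + b - 1) * ProbabilityTheory.beta a b) ?_ ?_ ?_
  · have hin : ∀ t ∈ Ioo 0 x, ∫ q in Ioo 0 x,
        ((if q < t then (x - t) ^ (a - 1) * (t - q) ^ (b - 1) else 0 : ℝ) : ℂ) * w q =
        (((x - t) ^ (a - 1) : ℝ) : ℂ) *
          ∫ q in (0:ℝ)..t, (((t - q) ^ (b - 1) : ℝ) : ℂ) * w q := by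
      intro t ht
      rw [← intervalIntegral.integral_const_mul, ← setIntegral_lower ht]
      congr 1 with q
      split_ifs
      · push_cast; ring
      · simp
    refine ⟨key.1.congr_fun hin measurableSet_Ioo, ?_⟩
    rw [← key.2]
    exact setIntegral_congr_fun measurableSet_Ioo fun t ht => (hin t ht).symm
  · refine Measurable.ite (measurableSet_lt measurable_snd measurable_fst) ?_ measurable_const
    fun_prop
  · intro t ht q hq
    split_ifs with h
    · exact mul_nonneg (Real.rpow_nonneg (sub_nonneg.2 ht.2.le) _)
        (Real.rpow_nonneg (sub_nonneg.2 h.le) _)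
    · exact le_rfl
  · intro q hq
    exact integrableOn_upper hq (beta_integrable ha hb hq.2)
  · intro q hq
    rw [setIntegral_upper hq (fun t => (x - t) ^ (a - 1) * (t - q) ^ (b - 1))]
    exact beta_interval ha hb hq.2
  · refine Integrable.bdd_mul (c := x ^ (a + b - 1) * ProbabilityTheory.beta a b) hw ?_ ?_
    · refine Measurable.aestronglyMeasurable ?_
      fun_prop
    · filter_upwards [ae_restrict_mem measurableSet_Ioo] with q hq
      have h0 := (ProbabilityTheory.beta_pos ha hb).le
      have h1 : 0 ≤ x - q := sub_nonneg.2 hq.2.le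
      rw [Complex.norm_real, Real.norm_of_nonneg (by positivity)]
      gcongr
      linarith [hq.1]

/-- Fubini for `∫₀ˣ k(p) ∫ₚˣ f(t) dt dp`. -/
lemma fubini_upper {x : ℝ} {k κ : ℝ → ℝ} {f : ℝ → ℂ} (hk : Measurable k)
    (hk0 : ∀ p ∈ Ioo 0 x, 0 ≤ k p) (hf : IntegrableOn f (Ioo 0 x))
    (hki : ∀ t ∈ Ioo 0 x, IntervalIntegrable k volume 0 t)
    (hκ : ∀ t ∈ Ioo 0 x, ∫ p in (0:ℝ)..t, k p = κ t)
    (hκf : IntegrableOn (fun t => (κ t : ℂ) * f t) (Ioo 0 x)) :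
    ∫ p in Ioo 0 x, (k p : ℂ) * ∫ t in p..x, f t = ∫ t in Ioo 0 x, (κ t : ℂ) * f t := by
  have key := fubini_kernel x (fun p t => if p < t then k p else 0) ?_ ?_ f hf.1 κ ?_ ?_ hκf
  · rw [← key.2]
    refine setIntegral_congr_fun measurableSet_Ioo fun p hp => ?_
    rw [← intervalIntegral.integral_const_mul, ← setIntegral_upper hp]
    congr 1 with t
    split_ifs <;> simp
  · exact Measurable.ite (measurableSet_lt measurable_fst measurable_snd)
      (hk.comp measurable_fst) measurable_const
  · intro p hp t ht
    split_ifs with h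
    · exact hk0 p hp
    · exact le_rfl
  · intro t ht
    exact integrableOn_lower ht (hki t ht)
  · intro t ht
    rw [setIntegral_lower ht k]
    exact hκ t ht

/-- Fubini for `∫₀ˣ k(r) ∫₀ʳ g(t) dt dr`. -/
lemma fubini_lower {x : ℝ} {k L : ℝ → ℝ} {g : ℝ → ℂ} (hk : Measurable k)
    (hk0 : ∀ r ∈ Ioo 0 x, 0 ≤ k r) (hg : IntegrableOn g (Ioo 0 x))
    (hki : ∀ t ∈ Ioo 0 x, IntervalIntegrable k volume t x)
    (hL : ∀ t ∈ Ioo 0 x, ∫ r in t..x, k r = L t)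
    (hLg : IntegrableOn (fun t => (L t : ℂ) * g t) (Ioo 0 x)) :
    ∫ r in Ioo 0 x, (k r : ℂ) * ∫ t in (0:ℝ)..r, g t = ∫ t in Ioo 0 x, (L t : ℂ) * g t := by
  have key := fubini_kernel x (fun r t => if t < r then k r else 0) ?_ ?_ g hg.1 L ?_ ?_ hLg
  · rw [← key.2]
    refine setIntegral_congr_fun measurableSet_Ioo fun r hr => ?_
    rw [← intervalIntegral.integral_const_mul, ← setIntegral_lower hr]
    congr 1 with t
    split_ifs <;> simp
  · exact Measurable.ite (measurableSet_lt measurable_snd measurable_fst)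
      (hk.comp measurable_fst) measurable_const
  · intro r hr t ht
    split_ifs with h
    · exact hk0 r hr
    · exact le_rfl
  · intro t ht
    exact integrableOn_upper ht (hki t ht)
  · intro t ht
    rw [setIntegral_upper ht k]
    exact hL t ht

/-! ### A Marchaud-type representation -/

/-- The weight `α (x - p)^(-α-1) + x^(-α-1)` of the differences `u x - u p`. -/
noncomputable def marchaudWeight (α x p : ℝ) : ℝ :=
  α * (x - p) ^ (-α - 1) + x ^ (-α - 1)

lemma marchaudWeight_measurable (α x : ℝ) : Measurable (marchaudWeight α x) := by
  unfold marchaudWeight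
  fun_prop

lemma marchaudWeight_nonneg {α x p : ℝ} (hα : 0 < α) (hx : 0 < x) (hp : p < x) :
    0 ≤ marchaudWeight α x p := by
  have : 0 < x - p := sub_pos.2 hp
  unfold marchaudWeight
  positivity

lemma intervalIntegrable_rpow_sub {x t e : ℝ} (ht : t ∈ Ioo 0 x) :
    IntervalIntegrable (fun p => (x - p) ^ e) volume 0 t := by
  apply ContinuousOn.intervalIntegrable
  intro p hp
  rw [uIcc_of_le ht.1.le] at hp
  refine ContinuousAt.continuousWithinAt ?_
  refine ContinuousAt.rpow_const (by fun_prop) (Or.inl ?_)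
  linarith [hp.2, ht.2]

lemma integral_marchaudWeight {α x t : ℝ} (hα : 0 < α) (ht : t ∈ Ioo 0 x) :
    ∫ p in (0:ℝ)..t, marchaudWeight α x p =
      (x - t) ^ (-α) - x ^ (-α) + t * x ^ (-α - 1) := by
  unfold marchaudWeight
  have hi := intervalIntegrable_rpow_sub (e := -α - 1) ht
  rw [intervalIntegral.integral_add (hi.const_mul α) (by simp),
    intervalIntegral.integral_const_mul,
    intervalIntegral.integral_comp_sub_left (fun r => r ^ (-α - 1)) x,
    integral_rpow, intervalIntegral.integral_const]
  · simp only [sub_zero, smul_eq_mul]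
    have : -α - 1 + 1 = -α := by ring
    rw [this]
    field_simp
    ring
  · right
    refine ⟨by linarith, ?_⟩
    rw [uIcc_of_le (by linarith [ht.1])]
    intro h
    linarith [h.1, ht.2]

/-- Differences of a primitive `u` of `f` reproduce `∫₀ˣ (x - t)^(-α) f(t) dt`.
The kernel `(x - t)^(-α)` is
`∫₀ᵗ α (x - p)^(-α-1) dp + x^(-α)`, and Hardy's identity
`1 = t / x + t ∫ₜˣ r⁻² dr` rewrites the boundary term. -/
lemma marchaud_repr {α x : ℝ} (hα : 0 < α) (hx : 0 < x) {u f : ℝ → ℂ}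
    (hf : IntegrableOn f (Ioo 0 x))
    (hu : ∀ p y, 0 ≤ p → p ≤ y → y ≤ x → u y - u p = ∫ t in p..y, f t)
    (hfx : IntegrableOn (fun t => (((x - t) ^ (-α) : ℝ) : ℂ) * f t) (Ioo 0 x)) :
    ∫ t in Ioo 0 x, (((x - t) ^ (-α) : ℝ) : ℂ) * f t =
      (∫ p in Ioo 0 x, (marchaudWeight α x p : ℂ) * (u x - u p)) +
      ((x ^ (-α) : ℝ) : ℂ) *
        ∫ r in Ioo 0 x, (((r ^ 2)⁻¹ : ℝ) : ℂ) * ∫ p in Ioo 0 r, (u r - u p) := by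
  have hbdd : ∀ φ : ℝ → ℝ, Measurable φ → (∃ c, ∀ t ∈ Ioo 0 x, |φ t| ≤ c) →
      IntegrableOn (fun t => (φ t : ℂ) * f t) (Ioo 0 x) := by
    rintro φ hφ ⟨c, hc⟩
    refine Integrable.bdd_mul (c := c) hf ?_ ?_
    · exact (Complex.measurable_ofReal.comp hφ).aestronglyMeasurable
    · filter_upwards [ae_restrict_mem measurableSet_Ioo] with q hq
      rw [Complex.norm_real]
      exact hc q hq
  have htf : IntegrableOn (fun t : ℝ => (t : ℂ) * f t) (Ioo 0 x) :=
    hbdd (fun t => t) measurable_id ⟨x, fun t ht => by rw [abs_of_pos ht.1]; exact ht.2.le⟩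
  -- the part of the kernel that vanishes at `t = 0`
  have e1 : ∫ p in Ioo 0 x, (marchaudWeight α x p : ℂ) * (u x - u p) =
      ∫ t in Ioo 0 x, (((x - t) ^ (-α) - x ^ (-α) + t * x ^ (-α - 1) : ℝ) : ℂ) * f t := by
    rw [← fubini_upper (marchaudWeight_measurable α x)
      (fun p hp => marchaudWeight_nonneg hα hx hp.2) hf
      (fun t ht => ((intervalIntegrable_rpow_sub ht).const_mul α).add (by simp))
      (fun t ht => integral_marchaudWeight hα ht) ?_]
    · refine setIntegral_congr_fun measurableSet_Ioo fun p hp => ?_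
      rw [hu p x hp.1.le hp.2.le le_rfl]
    · refine ((hfx.sub (hf.const_mul ((x ^ (-α) : ℝ) : ℂ))).add
        (htf.const_mul ((x ^ (-α - 1) : ℝ) : ℂ))).congr_fun (fun t _ => ?_) measurableSet_Ioo
      simp only [Pi.add_apply, Pi.sub_apply]
      push_cast
      ring
  have e2 : ∀ r ∈ Ioo 0 x, ∫ p in Ioo 0 r, (u r - u p) = ∫ t in (0:ℝ)..r, (t : ℂ) * f t := by
    intro r hr
    have hsub : Ioo 0 r ⊆ Ioo 0 x := Ioo_subset_Ioo_right hr.2.le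
    have := fubini_upper (x := r) (k := fun _ => 1) (κ := fun t => t) measurable_const
      (fun _ _ => zero_le_one) (hf.mono_set hsub) (fun _ _ => by simp) (fun t _ => by simp)
      (htf.mono_set hsub)
    rw [intervalIntegral.integral_of_le hr.1.le, integral_Ioc_eq_integral_Ioo, ← this]
    refine setIntegral_congr_fun measurableSet_Ioo fun p hp => ?_
    simp only [Complex.ofReal_one, one_mul]
    exact hu p r hp.1.le hp.2.le hr.2.le
  have hLg : ∀ t ∈ Ioo 0 x, ((1 - t / x : ℝ) : ℂ) * f t =
      ((t⁻¹ - x⁻¹ : ℝ) : ℂ) * ((t : ℂ) * f t) := by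
    intro t ht
    have h1 : (t : ℂ) ≠ 0 := by exact_mod_cast ht.1.ne'
    have h2 : (x : ℂ) ≠ 0 := by exact_mod_cast hx.ne'
    push_cast
    field_simp
  have hi1 : IntegrableOn (fun t => ((1 - t / x : ℝ) : ℂ) * f t) (Ioo 0 x) := by
    refine hbdd (fun t => 1 - t / x) (by fun_prop) ⟨1, fun t ht => ?_⟩
    have h0 : 0 ≤ t / x := div_nonneg ht.1.le hx.le
    have h1 : t / x ≤ 1 := (div_le_one hx).2 ht.2.le
    rw [abs_le]
    constructor <;> linarith
  have e3 : ∫ r in Ioo 0 x, (((r ^ 2)⁻¹ : ℝ) : ℂ) * ∫ p in Ioo 0 r, (u r - u p) =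
      ∫ t in Ioo 0 x, ((1 - t / x : ℝ) : ℂ) * f t := by
    have hcont : ∀ t ∈ Ioo 0 x, (0:ℝ) ∉ uIcc t x := by
      intro t ht h
      rw [uIcc_of_le ht.2.le] at h
      linarith [h.1, ht.1]
    have := fubini_lower (x := x) (k := fun r => r ^ (-2 : ℝ)) (L := fun t => t⁻¹ - x⁻¹)
      (g := fun t => (t : ℂ) * f t) (by fun_prop)
      (fun r hr => Real.rpow_nonneg hr.1.le _) htf
      (fun t ht => intervalIntegral.intervalIntegrable_rpow (Or.inr (hcont t ht)))
      (fun t ht => ?_) (hi1.congr_fun hLg measurableSet_Ioo)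
    · rw [setIntegral_congr_fun measurableSet_Ioo hLg, ← this]
      refine setIntegral_congr_fun measurableSet_Ioo fun r hr => ?_
      rw [e2 r hr, Real.rpow_neg hr.1.le, Real.rpow_ofNat]
    · rw [integral_rpow (Or.inr ⟨by norm_num, hcont t ht⟩)]
      have : (-2 + 1 : ℝ) = -1 := by norm_num
      rw [this, Real.rpow_neg_one, Real.rpow_neg_one]
      ring
  rw [e1, e3, ← integral_const_mul, ← integral_add ?_ (hi1.const_mul _)]
  · refine setIntegral_congr_fun measurableSet_Ioo fun t ht => ?_
    rw [← mul_assoc, ← add_mul, ← Complex.ofReal_mul, ← Complex.ofReal_add]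
    congr 2
    rw [Real.rpow_sub_one hx.ne']
    field_simp
    ring
  · refine ((hfx.sub (hf.const_mul ((x ^ (-α) : ℝ) : ℂ))).add
      (htf.const_mul ((x ^ (-α - 1) : ℝ) : ℂ))).congr_fun (fun t _ => ?_) measurableSet_Ioo
    simp only [Pi.add_apply, Pi.sub_apply]
    push_cast
    ring

/-! ### The Gagliardo estimate -/

lemma enorm_add_sq_le (a b : ℂ) : ‖a + b‖ₑ ^ 2 ≤ 2 * ‖a‖ₑ ^ 2 + 2 * ‖b‖ₑ ^ 2 := by
  have h : ‖a + b‖₊ ^ 2 ≤ 2 * ‖a‖₊ ^ 2 + 2 * ‖b‖₊ ^ 2 := by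
    rw [← NNReal.coe_le_coe]
    push_cast
    have := norm_add_le a b
    nlinarith [norm_nonneg (a + b), norm_nonneg a, norm_nonneg b, sq_nonneg (‖a‖ - ‖b‖)]
  simp only [enorm_eq_nnnorm]
  exact_mod_cast h

lemma lintegral_rpow_Ioo {x e : ℝ} (hx : 0 < x) (he : -1 < e) :
    ∫⁻ r in Ioo 0 x, ENNReal.ofReal (r ^ e) = ENNReal.ofReal (x ^ (e + 1) / (e + 1)) := by
  have hi : IntegrableOn (fun r : ℝ => r ^ e) (Ioo 0 x) :=
    ((intervalIntegrable_iff_integrableOn_Ioo_of_le hx.le).1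
      (intervalIntegral.intervalIntegrable_rpow' he))
  rw [← ofReal_integral_eq_lintegral_ofReal hi]
  · rw [← integral_Ioc_eq_integral_Ioo, ← intervalIntegral.integral_of_le hx.le,
      integral_rpow (Or.inl he), Real.zero_rpow (by linarith), sub_zero]
  · filter_upwards [ae_restrict_mem measurableSet_Ioo] with r hr
    exact Real.rpow_nonneg hr.1.le _

lemma lintegral_rpow_sub_Ioo {x e : ℝ} (hx : 0 < x) (he : -1 < e) :
    ∫⁻ p in Ioo 0 x, ENNReal.ofReal ((x - p) ^ e) = ENNReal.ofReal (x ^ (e + 1) / (e + 1)) := by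
  have hi : IntegrableOn (fun p : ℝ => (x - p) ^ e) (Ioo 0 x) := by
    have := (intervalIntegral.intervalIntegrable_rpow' (a := 0) (b := x) he).comp_sub_left x
    rw [sub_zero, sub_self] at this
    exact ((intervalIntegrable_iff_integrableOn_Ioo_of_le hx.le).1 this.symm)
  rw [← ofReal_integral_eq_lintegral_ofReal hi]
  · rw [← integral_Ioc_eq_integral_Ioo, ← intervalIntegral.integral_of_le hx.le,
      intervalIntegral.integral_comp_sub_left (fun r => r ^ e) x, sub_zero, sub_self,
      integral_rpow (Or.inl he), Real.zero_rpow (by linarith), sub_zero]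
  · filter_upwards [ae_restrict_mem measurableSet_Ioo] with r hr
    exact Real.rpow_nonneg (sub_nonneg.2 hr.2.le) _

/-- The inner Gagliardo integral `∫₀¹ |u x - u y|² |x - y|^(-β) dy`, as an extended
nonnegative number. -/
noncomputable def gag (β : ℝ) (u : ℝ → ℂ) (x : ℝ) : ENNReal :=
  ∫⁻ y in Ioo 0 1, ‖u x - u y‖ₑ ^ 2 * ENNReal.ofReal (|x - y| ^ (-β))

lemma gag_measurable (β : ℝ) {u : ℝ → ℂ} (hu : Continuous u) : Measurable (gag β u) := by
  unfold gag
  refine Measurable.lintegral_prod_right'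
    (f := fun z : ℝ × ℝ => ‖u z.1 - u z.2‖ₑ ^ 2 * ENNReal.ofReal (|z.1 - z.2| ^ (-β))) ?_
  have := hu.measurable
  fun_prop

/-- Cauchy–Schwarz for a weighted integral of differences of `u`. -/
lemma enorm_diff_integral_sq_le {x A e β : ℝ} (hx : x ∈ Ioo 0 1) {m : ℝ → ℝ} {u : ℝ → ℂ}
    (hu : Continuous u) (hm : ∀ p ∈ Ioo 0 x, |m p| ≤ A * (x - p) ^ e) (hA : 0 ≤ A)
    (he : -1 < 2 * e + β) :
    ‖∫ p in Ioo 0 x, (m p : ℂ) * (u x - u p)‖ₑ ^ 2 ≤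
      ENNReal.ofReal (A ^ 2 * (x ^ (2 * e + β + 1) / (2 * e + β + 1))) * gag β u x := by
  have hum := hu.measurable
  calc ‖∫ p in Ioo 0 x, (m p : ℂ) * (u x - u p)‖ₑ ^ 2
      ≤ (∫⁻ p in Ioo 0 x, ‖(m p : ℂ) * (u x - u p)‖ₑ) ^ 2 := by
        gcongr
        exact enorm_integral_le_lintegral_enorm _
    _ ≤ (∫⁻ p in Ioo 0 x, ENNReal.ofReal (A * (x - p) ^ (e + β / 2)) *
          (‖u x - u p‖ₑ * ENNReal.ofReal ((x - p) ^ (-β / 2)))) ^ 2 := by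
        gcongr ?_ ^ 2
        refine setLIntegral_mono' measurableSet_Ioo fun p hp => ?_
        have h0 : 0 < x - p := sub_pos.2 hp.2
        rw [enorm_mul, mul_left_comm, mul_comm, ← ENNReal.ofReal_mul (by positivity)]
        gcongr
        rw [mul_assoc, ← Real.rpow_add h0, ← ofReal_norm, Complex.norm_real]
        gcongr
        have : e + β / 2 + -β / 2 = e := by ring
        rw [this]
        exact hm p hp
    _ ≤ (∫⁻ p in Ioo 0 x, ENNReal.ofReal (A * (x - p) ^ (e + β / 2)) ^ 2) *
          ∫⁻ p in Ioo 0 x, (‖u x - u p‖ₑ * ENNReal.ofReal ((x - p) ^ (-β / 2))) ^ 2 :=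
        lintegral_mul_sq_le (by fun_prop) (by fun_prop)
    _ ≤ _ := by
        gcongr
        · have : ∀ p ∈ Ioo 0 x, ENNReal.ofReal (A * (x - p) ^ (e + β / 2)) ^ 2 =
              ENNReal.ofReal (A ^ 2) * ENNReal.ofReal ((x - p) ^ (2 * e + β)) := by
            intro p hp
            have h0 : 0 < x - p := sub_pos.2 hp.2
            rw [← ENNReal.ofReal_pow (by positivity), ← ENNReal.ofReal_mul (by positivity),
              mul_pow, ← Real.rpow_mul_natCast h0.le]
            congr 3
            push_cast
            ring
          rw [setLIntegral_congr_fun measurableSet_Ioo this,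
            lintegral_const_mul _ (by fun_prop), lintegral_rpow_sub_Ioo hx.1 he,
            ← ENNReal.ofReal_mul (by positivity)]
        · unfold gag
          refine (lintegral_mono_set (Ioo_subset_Ioo_right hx.2.le)).trans' ?_
          refine setLIntegral_mono' measurableSet_Ioo fun p hp => ?_
          have h0 : 0 < x - p := sub_pos.2 hp.2
          have he2 : -β / 2 * ((2 : ℕ) : ℝ) = -β := by push_cast; ring
          rw [mul_pow, ← ENNReal.ofReal_pow (by positivity), ← Real.rpow_mul_natCast h0.le,
            abs_of_pos h0, he2]

/-- The bound `‖∫₀ˣ (x - t)^(-α) f(t) dt‖² ≤ C [u]²` in `L²(0,1)`, with the Gagliardo seminorm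
of exponent `2 + α²`. This exponent lies above both `2` and `1 + 2α`, as the Hardy term and the
Marchaud term require, and below the exponent `2 + α` of the order `(1 + α) / 2`. -/
lemma marchaud_estimate {α : ℝ} (hα : α ∈ Ioo (0:ℝ) 1) :
    ∃ C : ℝ, 0 < C ∧ ∀ u f : ℝ → ℂ, Continuous u → IntegrableOn f (Ioo 0 1) →
      (∀ p y, 0 ≤ p → p ≤ y → y ≤ 1 → u y - u p = ∫ t in p..y, f t) →
      (∀ x ∈ Ioo (0:ℝ) 1,
        IntegrableOn (fun t => (((x - t) ^ (-α) : ℝ) : ℂ) * f t) (Ioo 0 x)) →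
      ∫⁻ x in Ioo 0 1, ‖∫ t in Ioo 0 x, (((x - t) ^ (-α) : ℝ) : ℂ) * f t‖ₑ ^ 2 ≤
        ENNReal.ofReal C * ∫⁻ x in Ioo 0 1, gag (2 + α ^ 2) u x := by
  obtain ⟨h0, h1⟩ := hα
  have h1' : 0 < 1 - α := sub_pos.2 h1
  refine ⟨2 * ((1 + α) ^ 2 / (1 - α) ^ 2) + 2 * ((α ^ 2)⁻¹ * (1 / (1 - α) ^ 2)), by positivity,
    fun u f hu hf huf hfx => ?_⟩
  set S := ∫⁻ x in Ioo 0 1, gag (2 + α ^ 2) u x with hS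
  have hgm := gag_measurable (2 + α ^ 2) hu
  -- the Marchaud term
  have hP : ∀ x ∈ Ioo (0:ℝ) 1,
      ‖∫ p in Ioo 0 x, (marchaudWeight α x p : ℂ) * (u x - u p)‖ₑ ^ 2 ≤
        ENNReal.ofReal ((1 + α) ^ 2 / (1 - α) ^ 2) * gag (2 + α ^ 2) u x := by
    intro x hx
    have he : 2 * (-α - 1) + (2 + α ^ 2) + 1 = (1 - α) ^ 2 := by ring
    refine (enorm_diff_integral_sq_le (A := 1 + α) (e := -α - 1) (β := 2 + α ^ 2) hx hu ?_
      (by positivity) (by nlinarith)).trans ?_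
    · intro p hp
      have hxp : 0 < x - p := sub_pos.2 hp.2
      rw [abs_of_nonneg (marchaudWeight_nonneg h0 hx.1 hp.2)]
      have : x ^ (-α - 1) ≤ (x - p) ^ (-α - 1) :=
        Real.rpow_le_rpow_of_nonpos hxp (by linarith [hp.1]) (by linarith)
      unfold marchaudWeight
      linarith
    · gcongr
      rw [he, mul_div_assoc']
      gcongr
      have : x ^ ((1 - α) ^ 2) ≤ 1 := Real.rpow_le_one hx.1.le hx.2.le (by positivity)
      exact mul_le_of_le_one_right (by positivity) this
  -- the mean oscillation on `(0, r)`
  have hR : ∀ r ∈ Ioo (0:ℝ) 1, ‖∫ p in Ioo 0 r, (u r - u p)‖ₑ ^ 2 ≤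
      ENNReal.ofReal (r ^ (3 + α ^ 2)) * gag (2 + α ^ 2) u r := by
    intro r hr
    have := enorm_diff_integral_sq_le (m := fun _ => 1) (A := 1) (e := 0) (β := 2 + α ^ 2) hr hu
      (by simp) zero_le_one (by nlinarith)
    simp only [Complex.ofReal_one, one_mul, one_pow, mul_zero, zero_add] at this
    refine this.trans ?_
    gcongr ENNReal.ofReal ?_ * _
    have he : 2 + α ^ 2 + 1 = 3 + α ^ 2 := by ring
    rw [he]
    have := hr.1
    exact div_le_self (by positivity) (by nlinarith)
  -- the Hardy term
  have hQ : ∀ x ∈ Ioo (0:ℝ) 1,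
      ‖∫ r in Ioo 0 x, (((r ^ 2)⁻¹ : ℝ) : ℂ) * ∫ p in Ioo 0 r, (u r - u p)‖ₑ ^ 2 ≤
        ENNReal.ofReal (x ^ (α ^ 2) / α ^ 2) * S := by
    intro x hx
    calc ‖∫ r in Ioo 0 x, (((r ^ 2)⁻¹ : ℝ) : ℂ) * ∫ p in Ioo 0 r, (u r - u p)‖ₑ ^ 2
        ≤ (∫⁻ r in Ioo 0 x,
            ‖(((r ^ 2)⁻¹ : ℝ) : ℂ) * ∫ p in Ioo 0 r, (u r - u p)‖ₑ) ^ 2 := by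
          gcongr
          exact enorm_integral_le_lintegral_enorm _
      _ ≤ (∫⁻ r in Ioo 0 x, ENNReal.ofReal (r ^ ((α ^ 2 - 1) / 2)) *
            (gag (2 + α ^ 2) u r) ^ (1 / 2 : ℝ)) ^ 2 := by
          gcongr ?_ ^ 2
          refine setLIntegral_mono' measurableSet_Ioo fun r hr => ?_
          have hr0 := hr.1
          have h2 := hR r ⟨hr.1, hr.2.trans hx.2⟩
          have h3 := ENNReal.rpow_le_rpow h2 (by norm_num : (0:ℝ) ≤ 1 / 2)
          rw [ENNReal.mul_rpow_of_nonneg _ _ (by norm_num), ← ENNReal.rpow_natCast,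
            ← ENNReal.rpow_mul, ENNReal.ofReal_rpow_of_pos (by positivity),
            ← Real.rpow_mul hr0.le] at h3
          norm_num at h3
          rw [enorm_mul, ← ofReal_norm, Complex.norm_real,
            Real.norm_of_nonneg (by positivity)]
          refine (mul_le_mul_right h3 _).trans ?_
          rw [← mul_assoc, ← ENNReal.ofReal_mul (by positivity)]
          norm_num
          gcongr
          apply le_of_eq
          rw [← Real.rpow_natCast, ← Real.rpow_neg hr0.le, ← Real.rpow_add hr0]
          congr 1
          push_cast
          ring
      _ ≤ (∫⁻ r in Ioo 0 x, ENNReal.ofReal (r ^ ((α ^ 2 - 1) / 2)) ^ 2) *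
            ∫⁻ r in Ioo 0 x, ((gag (2 + α ^ 2) u r) ^ (1 / 2 : ℝ)) ^ 2 :=
          lintegral_mul_sq_le (by fun_prop) (by fun_prop)
      _ ≤ _ := by
          gcongr
          · have : ∀ r ∈ Ioo 0 x, ENNReal.ofReal (r ^ ((α ^ 2 - 1) / 2)) ^ 2 =
                ENNReal.ofReal (r ^ (α ^ 2 - 1)) := by
              intro r hr
              have hr0 := hr.1
              rw [← ENNReal.ofReal_pow (by positivity), ← Real.rpow_mul_natCast hr0.le]
              congr 2
              push_cast
              ring
            rw [setLIntegral_congr_fun measurableSet_Ioo this,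
              lintegral_rpow_Ioo hx.1 (by nlinarith), sub_add_cancel]
          · rw [hS]
            refine (lintegral_mono_set (Ioo_subset_Ioo_right hx.2.le)).trans' ?_
            apply le_of_eq
            congr 1 with r
            rw [← ENNReal.rpow_natCast, ← ENNReal.rpow_mul]
            norm_num
  calc ∫⁻ x in Ioo 0 1, ‖∫ t in Ioo 0 x, (((x - t) ^ (-α) : ℝ) : ℂ) * f t‖ₑ ^ 2
      ≤ ∫⁻ x in Ioo 0 1, (ENNReal.ofReal (2 * ((1 + α) ^ 2 / (1 - α) ^ 2)) *
          gag (2 + α ^ 2) u x +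
          ENNReal.ofReal (2 * (α ^ 2)⁻¹) * S * ENNReal.ofReal (x ^ (α ^ 2 - 2 * α))) := by
        refine setLIntegral_mono' measurableSet_Ioo fun x hx => ?_
        have hx0 := hx.1
        rw [marchaud_repr h0 hx.1 (hf.mono_set (Ioo_subset_Ioo_right hx.2.le))
          (fun p y hp hpy hy => huf p y hp hpy (hy.trans hx.2.le)) (hfx x hx)]
        refine (enorm_add_sq_le _ _).trans ?_
        refine add_le_add ?_ ?_
        · rw [ENNReal.ofReal_mul (by norm_num), mul_assoc]
          norm_num
          gcongr
          exact hP x hx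
        · rw [enorm_mul, mul_pow, ← ofReal_norm, Complex.norm_real,
            Real.norm_of_nonneg (by positivity)]
          refine (mul_le_mul_right (mul_le_mul_right (hQ x hx) _) _).trans ?_
          rw [← ENNReal.ofReal_pow (by positivity), ← mul_assoc _ _ S, ← mul_assoc _ _ S,
            ← ENNReal.ofReal_mul (by positivity), mul_right_comm _ S,
            ← ENNReal.ofReal_mul (by positivity)]
          have h2 : (2 : ENNReal) = ENNReal.ofReal 2 := by norm_num
          rw [h2, ← ENNReal.ofReal_mul (by positivity)]
          refine mul_le_mul_left (ENNReal.ofReal_le_ofReal (le_of_eq ?_)) _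
          have he2 : α ^ 2 - 2 * α = -α * ((2 : ℕ) : ℝ) + α ^ 2 := by push_cast; ring
          rw [he2, Real.rpow_add hx0, Real.rpow_mul_natCast hx0.le]
          ring
    _ = _ := by
        rw [lintegral_add_left (by fun_prop), lintegral_const_mul _ hgm,
          lintegral_const_mul _ (by fun_prop), lintegral_rpow_Ioo one_pos (by nlinarith),
          Real.one_rpow, mul_right_comm, ← add_mul, ← ENNReal.ofReal_mul (by positivity),
          ← ENNReal.ofReal_add (by positivity) (by
            have : 0 < α ^ 2 - 2 * α + 1 := by nlinarith
            positivity)]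
        congr 2
        have : α ^ 2 - 2 * α + 1 = (1 - α) ^ 2 := by ring
        rw [this]
        ring

/-! ### Interpolation between Gagliardo seminorms -/

/-- For `b < a` the kernel `r^(-b)` is dominated by a small multiple of `r^(-a)` near `0` and by
a constant away from `0`. -/
lemma rpow_neg_le_add {a b η : ℝ} (hb : 0 < b) (hab : b < a) (hη : 0 < η) :
    ∃ K : ℝ, 0 < K ∧ ∀ r : ℝ, 0 < r → r ^ (-b) ≤ η * r ^ (-a) + K := by
  have hd : 0 < a - b := sub_pos.2 hab
  refine ⟨(η ^ (1 / (a - b))) ^ (-b), by positivity, fun r hr => ?_⟩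
  rcases le_total r (η ^ (1 / (a - b))) with h | h
  · have h1 : r ^ (a - b) ≤ η := by
      calc r ^ (a - b) ≤ (η ^ (1 / (a - b))) ^ (a - b) := by gcongr
        _ = η := by
          rw [← Real.rpow_mul hη.le, one_div_mul_cancel hd.ne', Real.rpow_one]
    have h2 : r ^ (-b) = r ^ (a - b) * r ^ (-a) := by
      rw [← Real.rpow_add hr]; congr 1; ring
    have h3 : r ^ (a - b) * r ^ (-a) ≤ η * r ^ (-a) := by gcongr
    have h4 : 0 ≤ (η ^ (1 / (a - b))) ^ (-b) := by positivity
    linarith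
  · have h1 : r ^ (-b) ≤ (η ^ (1 / (a - b))) ^ (-b) :=
      Real.rpow_le_rpow_of_nonpos (by positivity) h (by linarith)
    have h2 : 0 ≤ η * r ^ (-a) := by positivity
    linarith

lemma gag_interp {a b η : ℝ} (hb : 0 < b) (hab : b < a) (hη : 0 < η) :
    ∃ K : ℝ, 0 < K ∧ ∀ u : ℝ → ℂ, Continuous u →
      ∫⁻ x in Ioo 0 1, gag b u x ≤ ENNReal.ofReal η * (∫⁻ x in Ioo 0 1, gag a u x) +
        ENNReal.ofReal K * ∫⁻ x in Ioo 0 1, ‖u x‖ₑ ^ 2 := by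
  obtain ⟨K, hK, hr⟩ := rpow_neg_le_add hb hab hη
  refine ⟨4 * K, by positivity, fun u hu => ?_⟩
  have hum := hu.measurable
  have hga := gag_measurable a hu
  set L := ∫⁻ x in Ioo (0:ℝ) 1, ‖u x‖ₑ ^ 2 with hL
  have hpt : ∀ x y, ‖u x - u y‖ₑ ^ 2 * ENNReal.ofReal (|x - y| ^ (-b)) ≤
      ENNReal.ofReal η * (‖u x - u y‖ₑ ^ 2 * ENNReal.ofReal (|x - y| ^ (-a))) +
        (ENNReal.ofReal K * 2 * ‖u x‖ₑ ^ 2 + ENNReal.ofReal K * 2 * ‖u y‖ₑ ^ 2) := by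
    intro x y
    rcases eq_or_ne x y with rfl | hxy
    · simp
    have h1 := hr _ (abs_pos.2 (sub_ne_zero.2 hxy))
    calc ‖u x - u y‖ₑ ^ 2 * ENNReal.ofReal (|x - y| ^ (-b))
        ≤ ‖u x - u y‖ₑ ^ 2 * ENNReal.ofReal (η * |x - y| ^ (-a) + K) := by gcongr
      _ = ENNReal.ofReal η * (‖u x - u y‖ₑ ^ 2 * ENNReal.ofReal (|x - y| ^ (-a))) +
          ENNReal.ofReal K * ‖u x - u y‖ₑ ^ 2 := by
        rw [ENNReal.ofReal_add (by positivity) hK.le, ENNReal.ofReal_mul hη.le]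
        ring
      _ ≤ _ := by
        gcongr
        have := enorm_add_sq_le (u x) (-u y)
        rw [← sub_eq_add_neg, enorm_neg] at this
        refine (mul_le_mul_right this _).trans (le_of_eq ?_)
        ring
  have hin : ∀ x, gag b u x ≤ ENNReal.ofReal η * gag a u x +
      (ENNReal.ofReal K * 2 * ‖u x‖ₑ ^ 2 + ENNReal.ofReal K * 2 * L) := by
    intro x
    unfold gag
    refine (lintegral_mono fun y => hpt x y).trans (le_of_eq ?_)
    rw [lintegral_add_left (by fun_prop), lintegral_add_left (by fun_prop),
      lintegral_const_mul _ (by fun_prop), lintegral_const_mul _ (by fun_prop),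
      lintegral_const_mul _ (by fun_prop)]
    simp [hL]
  refine (lintegral_mono hin).trans (le_of_eq ?_)
  rw [lintegral_add_left (by fun_prop), lintegral_add_left (by fun_prop),
    lintegral_const_mul _ (by fun_prop), lintegral_const_mul _ (by fun_prop), ← hL,
    ENNReal.ofReal_mul (by norm_num)]
  simp only [lintegral_const, MeasurableSet.univ, Measure.restrict_apply, univ_inter,
    Real.volume_Ioo, sub_zero, ENNReal.ofReal_one, mul_one, ENNReal.ofReal_ofNat]
  ring

/-! ### Hölder continuity and finiteness of the seminorm -/

lemma lintegral_abs_rpow_le {x e : ℝ} (hx : x ∈ Icc (0:ℝ) 1) (he : -1 < e) :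
    ∫⁻ y in Ioo 0 1, ENNReal.ofReal (|x - y| ^ e) ≤ ENNReal.ofReal (2 / (e + 1)) := by
  have he1 : 0 < e + 1 := by linarith
  calc ∫⁻ y in Ioo 0 1, ENNReal.ofReal (|x - y| ^ e)
      ≤ ∫⁻ y in Ioo (x - 1) (x + 1), ENNReal.ofReal (|x - y| ^ e) :=
        lintegral_mono_set (Ioo_subset_Ioo (by linarith [hx.2]) (by linarith [hx.1]))
    _ = ∫⁻ r in Ioo (-1) 1, ENNReal.ofReal (|r| ^ e) := by
        have := (Measure.measurePreserving_sub_left volume x).setLIntegral_comp_preimage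
          (s := Ioo (-1) 1) measurableSet_Ioo
          (f := fun r : ℝ => ENNReal.ofReal (|r| ^ e)) (by fun_prop)
        rw [← this]
        congr 2
        ext y
        simp only [mem_Ioo, mem_preimage]
        constructor <;> rintro ⟨h1, h2⟩ <;> constructor <;> linarith
    _ ≤ (∫⁻ r in Ioo (-1) 0, ENNReal.ofReal (|r| ^ e)) +
          ∫⁻ r in Ico 0 1, ENNReal.ofReal (|r| ^ e) := by
        rw [← Ioo_union_Ico_eq_Ioo (a := (-1:ℝ)) (b := 0) (c := 1) (by norm_num) (by norm_num)]
        exact lintegral_union_le _ _ _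
    _ = ENNReal.ofReal (1 / (e + 1)) + ENNReal.ofReal (1 / (e + 1)) := by
        have h1 : ∫⁻ r in Ioo (0:ℝ) 1, ENNReal.ofReal (|r| ^ e) =
            ENNReal.ofReal (1 / (e + 1)) := by
          have := lintegral_rpow_Ioo one_pos he
          rw [Real.one_rpow] at this
          rw [← this]
          refine setLIntegral_congr_fun measurableSet_Ioo fun r hr => ?_
          simp only [abs_of_pos hr.1]
        congr 1
        · rw [← h1]
          have := (Measure.measurePreserving_neg (volume : Measure ℝ)).setLIntegral_comp_preimage
            (s := Ioo 0 1) measurableSet_Ioo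
            (f := fun r : ℝ => ENNReal.ofReal (|r| ^ e)) (by fun_prop)
          rw [← this]
          simp
        · rw [← h1]
          exact setLIntegral_congr Ioo_ae_eq_Ico.symm
    _ = _ := by
        rw [← ENNReal.ofReal_add (by positivity) (by positivity)]
        congr 1
        ring

/-- The increment of `r ↦ r₊^α` has square at most `h^(1+2α-α²) |x - q|^(α²-1)`: it is bounded
both by `h^α` and by `h |x - q|^(α-1)`, and these are combined with weights `1 - α` and
`1 + α`. -/
lemma kernel_increment {α x y q : ℝ} (hα : α ∈ Ioo (0:ℝ) 1) (hxy : x < y) (hq : q ≠ x) :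
    |max (y - q) 0 ^ α - max (x - q) 0 ^ α| ^ 2 ≤
      (y - x) ^ (1 + 2 * α - α ^ 2) * |x - q| ^ (α ^ 2 - 1) := by
  obtain ⟨h0, h1⟩ := hα
  have hh : 0 < y - x := sub_pos.2 hxy
  have hxq : 0 < |x - q| := abs_pos.2 (sub_ne_zero.2 hq.symm)
  set D := |max (y - q) 0 ^ α - max (x - q) 0 ^ α| with hD
  have hD0 : 0 ≤ D := abs_nonneg _
  have hDA : D ≤ (y - x) ^ α ∧ D ≤ (y - x) * |x - q| ^ (α - 1) := by
    rcases lt_or_gt_of_ne hq with hlt | hgt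
    · have hs : 0 < x - q := sub_pos.2 hlt
      have hyq : y - q = (x - q) + (y - x) := by ring
      rw [hD, max_eq_left (by linarith), max_eq_left hs.le, abs_of_pos hs, hyq, abs_of_nonneg]
      · constructor
        · linarith [Real.rpow_add_le_add_rpow hs.le hh.le h0.le h1.le]
        · have e1 : ∀ z : ℝ, 0 < z → z ^ α = z * z ^ (α - 1) := by
            intro z hz
            rw [Real.rpow_sub_one hz.ne']
            field_simp
          have e2 : (x - q + (y - x)) ^ (α - 1) ≤ (x - q) ^ (α - 1) :=
            Real.rpow_le_rpow_of_nonpos hs (by linarith) (by linarith)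
          rw [e1 _ hs, e1 (x - q + (y - x)) (by linarith)]
          have := mul_le_mul_of_nonneg_left e2 (by linarith : 0 ≤ x - q + (y - x))
          linarith
      · have : (x - q) ^ α ≤ (x - q + (y - x)) ^ α := by gcongr; linarith
        linarith
    · have hz : max (x - q) 0 = 0 := max_eq_right (by linarith)
      rw [hD, hz, Real.zero_rpow h0.ne', sub_zero, abs_of_nonneg (by positivity)]
      rcases lt_or_ge q y with hqy | hqy
      · rw [max_eq_left (by linarith)]
        have hA : (y - q) ^ α ≤ (y - x) ^ α :=
          Real.rpow_le_rpow (by linarith) (by linarith) h0.le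
        refine ⟨hA, hA.trans ?_⟩
        have e1 : (y - x) ^ α = (y - x) * (y - x) ^ (α - 1) := by
          rw [Real.rpow_sub_one hh.ne']
          field_simp
        rw [e1]
        refine mul_le_mul_of_nonneg_left ?_ hh.le
        refine Real.rpow_le_rpow_of_nonpos hxq ?_ (by linarith)
        rw [abs_of_neg (by linarith)]
        linarith
      · rw [max_eq_right (by linarith), Real.zero_rpow h0.ne']
        constructor <;> positivity
  calc D ^ 2 = D ^ (1 - α) * D ^ (1 + α) := by
        rw [← Real.rpow_add' hD0 (by norm_num)]
        norm_num
    _ ≤ ((y - x) ^ α) ^ (1 - α) * ((y - x) * |x - q| ^ (α - 1)) ^ (1 + α) :=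
        mul_le_mul (Real.rpow_le_rpow hD0 hDA.1 (by linarith))
          (Real.rpow_le_rpow hD0 hDA.2 (by linarith)) (by positivity) (by positivity)
    _ = _ := by
        rw [Real.mul_rpow hh.le (by positivity), ← Real.rpow_mul hh.le,
          ← Real.rpow_mul hxq.le, ← mul_assoc, ← Real.rpow_add hh]
        congr 2 <;> ring

/-- Increments of `x ↦ ∫ (x - q)₊^α w(q) dq` with `w ∈ L²`: the Hölder exponent
`(1 + 2α - α²) / 2` is larger than `(1 + α) / 2`. -/
lemma holder_increment {α : ℝ} (hα : α ∈ Ioo (0:ℝ) 1) {w : ℝ → ℂ}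
    (hw : AEStronglyMeasurable w (volume.restrict (Ioo 0 1))) {x y : ℝ}
    (hx : x ∈ Icc (0:ℝ) 1) (hxy : x < y) :
    ‖∫ q in Ioo 0 1, ((max (y - q) 0 ^ α - max (x - q) 0 ^ α : ℝ) : ℂ) * w q‖ₑ ^ 2 ≤
      ENNReal.ofReal (2 / α ^ 2) * (∫⁻ q in Ioo 0 1, ‖w q‖ₑ ^ 2) *
        ENNReal.ofReal ((y - x) ^ (1 + 2 * α - α ^ 2)) := by
  have h0 := hα.1
  have hh : 0 < y - x := sub_pos.2 hxy
  calc ‖∫ q in Ioo 0 1, ((max (y - q) 0 ^ α - max (x - q) 0 ^ α : ℝ) : ℂ) * w q‖ₑ ^ 2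
      ≤ (∫⁻ q in Ioo 0 1,
          ENNReal.ofReal |max (y - q) 0 ^ α - max (x - q) 0 ^ α| * ‖w q‖ₑ) ^ 2 := by
        gcongr
        refine (enorm_integral_le_lintegral_enorm _).trans (le_of_eq ?_)
        congr 1 with q
        rw [enorm_mul, ← ofReal_norm, Complex.norm_real, Real.norm_eq_abs]
    _ ≤ (∫⁻ q in Ioo 0 1, ENNReal.ofReal |max (y - q) 0 ^ α - max (x - q) 0 ^ α| ^ 2) *
          ∫⁻ q in Ioo 0 1, ‖w q‖ₑ ^ 2 :=
        lintegral_mul_sq_le (by fun_prop) hw.enorm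
    _ ≤ (∫⁻ q in Ioo 0 1, ENNReal.ofReal ((y - x) ^ (1 + 2 * α - α ^ 2)) *
          ENNReal.ofReal (|x - q| ^ (α ^ 2 - 1))) * ∫⁻ q in Ioo 0 1, ‖w q‖ₑ ^ 2 := by
        gcongr ?_ * _
        refine lintegral_mono_ae ?_
        filter_upwards [ae_restrict_of_ae ((countable_singleton x).ae_notMem volume)] with q hq
        rw [← ENNReal.ofReal_pow (abs_nonneg _), ← ENNReal.ofReal_mul (by positivity)]
        exact ENNReal.ofReal_le_ofReal (kernel_increment hα hxy hq)
    _ ≤ (ENNReal.ofReal ((y - x) ^ (1 + 2 * α - α ^ 2)) * ENNReal.ofReal (2 / α ^ 2)) *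
          ∫⁻ q in Ioo 0 1, ‖w q‖ₑ ^ 2 := by
        rw [lintegral_const_mul _ (by fun_prop)]
        gcongr
        have := lintegral_abs_rpow_le hx (e := α ^ 2 - 1) (by nlinarith)
        rwa [sub_add_cancel] at this
    _ = _ := by ring

/-- Hölder continuity makes the Gagliardo integral of order `(1 + α) / 2` converge, so that the
Bochner integral defining the seminorm agrees with the extended nonnegative one. -/
lemma sobSeminormSq_eq {α : ℝ} (hα : α ∈ Ioo (0:ℝ) 1) {u : ℝ → ℂ} (hu : Continuous u)
    {H : ENNReal} (hH : H ≠ ⊤)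
    (hhol : ∀ x ∈ Icc (0:ℝ) 1, ∀ y ∈ Icc (0:ℝ) 1, x < y →
      ‖u y - u x‖ₑ ^ 2 ≤ H * ENNReal.ofReal ((y - x) ^ (1 + 2 * α - α ^ 2))) :
    ∫⁻ x in Ioo 0 1, gag (2 + α) u x ≠ ⊤ ∧
    sobSeminormSq ((1 + α) / 2) u = (∫⁻ x in Ioo 0 1, gag (2 + α) u x).toReal := by
  obtain ⟨h0, h1⟩ := hα
  have hum := hu.measurable
  have hgm := gag_measurable (2 + α) hu
  have hhol' : ∀ x ∈ Ioo (0:ℝ) 1, ∀ y ∈ Ioo (0:ℝ) 1,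
      ‖u x - u y‖ₑ ^ 2 ≤ H * ENNReal.ofReal (|x - y| ^ (1 + 2 * α - α ^ 2)) := by
    intro x hx y hy
    rcases lt_trichotomy x y with h | h | h
    · have := hhol x (Ioo_subset_Icc_self hx) y (Ioo_subset_Icc_self hy) h
      rwa [enorm_sub_rev, abs_sub_comm, abs_of_pos (sub_pos.2 h)]
    · simp [h]
    · have := hhol y (Ioo_subset_Icc_self hy) x (Ioo_subset_Icc_self hx) h
      rwa [abs_of_pos (sub_pos.2 h)]
  have hbd : ∀ x ∈ Ioo (0:ℝ) 1,
      gag (2 + α) u x ≤ H * ENNReal.ofReal (2 / (α - α ^ 2 - 1 + 1)) := by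
    intro x hx
    unfold gag
    calc ∫⁻ y in Ioo 0 1, ‖u x - u y‖ₑ ^ 2 * ENNReal.ofReal (|x - y| ^ (-(2 + α)))
        ≤ ∫⁻ y in Ioo 0 1, H * ENNReal.ofReal (|x - y| ^ (α - α ^ 2 - 1)) := by
          refine setLIntegral_mono' measurableSet_Ioo fun y hy => ?_
          rcases eq_or_ne x y with rfl | hxy
          · simp
          have hp : 0 < |x - y| := abs_pos.2 (sub_ne_zero.2 hxy)
          have e : |x - y| ^ (α - α ^ 2 - 1) =
              |x - y| ^ (1 + 2 * α - α ^ 2) * |x - y| ^ (-(2 + α)) := by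
            rw [← Real.rpow_add hp]
            congr 1
            ring
          rw [e, ENNReal.ofReal_mul (by positivity), ← mul_assoc]
          gcongr
          exact hhol' x hx y hy
      _ = H * ∫⁻ y in Ioo 0 1, ENNReal.ofReal (|x - y| ^ (α - α ^ 2 - 1)) :=
          lintegral_const_mul _ (by fun_prop)
      _ ≤ _ := by
          gcongr
          exact lintegral_abs_rpow_le (Ioo_subset_Icc_self hx) (by nlinarith)
  have htop : ∀ x ∈ Ioo (0:ℝ) 1, gag (2 + α) u x ≠ ⊤ := fun x hx =>
    ((hbd x hx).trans_lt (ENNReal.mul_lt_top hH.lt_top ENNReal.ofReal_lt_top)).ne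
  constructor
  · refine ((setLIntegral_mono' measurableSet_Ioo hbd).trans_lt ?_).ne
    simp only [lintegral_const, MeasurableSet.univ, Measure.restrict_apply, univ_inter,
      Real.volume_Ioo, sub_zero, ENNReal.ofReal_one, mul_one]
    exact ENNReal.mul_lt_top hH.lt_top ENNReal.ofReal_lt_top
  · have hinner : ∀ x, ∫ y in (0:ℝ)..1, ‖u x - u y‖ ^ 2 / |x - y| ^ (1 + 2 * ((1 + α) / 2)) =
        (gag (2 + α) u x).toReal := by
      intro x
      rw [intervalIntegral.integral_of_le zero_le_one, integral_Ioc_eq_integral_Ioo,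
        integral_eq_lintegral_of_nonneg_ae (Eventually.of_forall fun y => by positivity)
          (Measurable.aestronglyMeasurable (by fun_prop))]
      unfold gag
      congr 2 with y
      rw [div_eq_mul_inv, ENNReal.ofReal_mul (by positivity), ENNReal.ofReal_pow (norm_nonneg _),
        ofReal_norm, Real.rpow_neg (abs_nonneg _)]
      congr 4
      ring
    unfold sobSeminormSq
    simp_rw [hinner]
    rw [intervalIntegral.integral_of_le zero_le_one, integral_Ioc_eq_integral_Ioo,
      integral_eq_lintegral_of_nonneg_ae (Eventually.of_forall fun y => ENNReal.toReal_nonneg)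
        (Measurable.aestronglyMeasurable (by fun_prop))]
    congr 1
    exact setLIntegral_congr_fun measurableSet_Ioo fun x hx => ENNReal.ofReal_toReal (htop x hx)

lemma L2normSq_eq {f : ℝ → ℂ} (hf : AEStronglyMeasurable f (volume.restrict (Ioo 0 1))) :
    L2normSq f = (∫⁻ x in Ioo 0 1, ‖f x‖ₑ ^ 2).toReal := by
  have hm : AEStronglyMeasurable (fun x => ‖f x‖ ^ 2) (volume.restrict (Ioo 0 1)) := hf.norm.pow 2
  unfold L2normSq
  rw [intervalIntegral.integral_of_le zero_le_one, integral_Ioc_eq_integral_Ioo,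
    integral_eq_lintegral_of_nonneg_ae (Eventually.of_forall fun y => by positivity) hm]
  congr 2 with x
  rw [ENNReal.ofReal_pow (norm_nonneg _), ofReal_norm]

/-! ### The graph of the operator -/

/-- What a pair in the graph of `A` satisfies, after extending `u` continuously from `[0,1]`. -/
lemma graph_core {α : ℝ} (hα : α ∈ Ioo (0:ℝ) 1) {u w : ℝ → ℂ} (h : InGraphA α u w) :
    ∃ U : ℝ → ℂ, Continuous U ∧ (∀ x ∈ Icc (0:ℝ) 1, u x = U x) ∧
      IntegrableOn (fracInt α w) (Ioo 0 1) ∧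
      (∀ p y, 0 ≤ p → p ≤ y → y ≤ 1 → U y - U p = ∫ t in p..y, fracInt α w t) ∧
      (∀ x ∈ Ioo (0:ℝ) 1,
        IntegrableOn (fun t => (((x - t) ^ (-α) : ℝ) : ℂ) * fracInt α w t) (Ioo 0 x)) ∧
      (∀ x ∈ Ioo (0:ℝ) 1, ∫ t in Ioo 0 x, (((x - t) ^ (-α) : ℝ) : ℂ) * fracInt α w t =
        (Real.Gamma (1 - α) : ℂ) * fracInt 1 w x) ∧
      AEStronglyMeasurable (fracInt 1 w) (volume.restrict (Ioo 0 1)) ∧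
      ∃ H : ENNReal, H ≠ ⊤ ∧ ∀ x ∈ Icc (0:ℝ) 1, ∀ y ∈ Icc (0:ℝ) 1, x < y →
        ‖U y - U x‖ₑ ^ 2 ≤ H * ENNReal.ofReal ((y - x) ^ (1 + 2 * α - α ^ 2)) := by
  obtain ⟨-, ⟨hwm, hw2⟩, hfi, huf⟩ := h
  have h0 := hα.1
  have h1 := hα.2
  have hΓ : Real.Gamma α ≠ 0 := (Real.Gamma_pos_of_pos h0).ne'
  set f := fracInt α w with hf
  have hf_eq : ∀ t, f t = (((Real.Gamma α)⁻¹ : ℝ) : ℂ) *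
      ∫ p in (0:ℝ)..t, (((t - p) ^ (α - 1) : ℝ) : ℂ) * w p := by
    intro t
    rw [hf, fracInt, if_neg h0.ne', Complex.real_smul]
  have hv_eq : ∀ x, fracInt 1 w x = ∫ p in (0:ℝ)..x, w p := by
    intro x
    rw [fracInt, if_neg one_ne_zero]
    simp
  have hwm' : AEStronglyMeasurable w (volume.restrict (Ioo 0 1)) :=
    hwm.mono_measure (Measure.restrict_mono Ioo_subset_Ioc_self le_rfl)
  have hwL2 : MemLp w 2 (volume.restrict (Ioc 0 1)) :=
    (memLp_two_iff_integrable_sq_norm hwm).2 hw2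
  have hwL1c : IntegrableOn w (Ioc 0 1) := hwL2.integrable one_le_two
  have hwL1 : IntegrableOn w (Ioo 0 1) := hwL1c.mono_set Ioo_subset_Ioc_self
  have hWtop : ∫⁻ q in Ioo (0:ℝ) 1, ‖w q‖ₑ ^ 2 ≠ ⊤ := by
    have := (hw2.mono_set Ioo_subset_Ioc_self).hasFiniteIntegral
    rw [HasFiniteIntegral] at this
    refine (lt_of_eq_of_lt ?_ this).ne
    congr 1 with q
    simp [enorm_pow]
  have hfc : IntegrableOn f (Ioc 0 1) :=
    (intervalIntegrable_iff_integrableOn_Ioc_of_le zero_le_one).1 hfi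
  have hfo : IntegrableOn f (Ioo 0 1) := hfc.mono_set Ioo_subset_Ioc_self
  -- the primitive of the extension of a function by zero is continuous on the whole line
  have hprim : ∀ g : ℝ → ℂ, IntegrableOn g (Ioc 0 1) →
      Continuous (fun x => ∫ t in (0:ℝ)..x, (Ioc (0:ℝ) 1).indicator g t) ∧
      ∀ p y, 0 ≤ p → p ≤ y → y ≤ 1 →
        ∫ t in p..y, (Ioc (0:ℝ) 1).indicator g t = ∫ t in p..y, g t := by
    intro g hg
    constructor
    · exact intervalIntegral.continuous_primitive
        (fun a b => ((integrable_indicator_iff measurableSet_Ioc).2 hg).intervalIntegrable) 0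
    · intro p y hp hpy hy
      rw [intervalIntegral.integral_of_le hpy, intervalIntegral.integral_of_le hpy]
      refine setIntegral_congr_fun measurableSet_Ioc fun t ht => ?_
      have ht' : t ∈ Ioc (0:ℝ) 1 := ⟨hp.trans_lt ht.1, ht.2.trans hy⟩
      simp only [Set.indicator, if_pos ht']
  obtain ⟨hFc, hFe⟩ := hprim f hfc
  obtain ⟨hVc, hVe⟩ := hprim w hwL1c
  set U : ℝ → ℂ := fun x => u 0 + ∫ t in (0:ℝ)..x, (Ioc (0:ℝ) 1).indicator f t with hU
  have hUd : ∀ p y, 0 ≤ p → p ≤ y → y ≤ 1 → U y - U p = ∫ t in p..y, f t := by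
    intro p y hp hpy hy
    have hii : ∀ a b : ℝ, IntervalIntegrable ((Ioc (0:ℝ) 1).indicator f) volume a b :=
      fun a b => ((integrable_indicator_iff measurableSet_Ioc).2 hfc).intervalIntegrable
    rw [← hFe p y hp hpy hy, hU]
    simp only [add_sub_add_left_eq_sub]
    exact intervalIntegral.integral_interval_sub_left (hii _ _) (hii _ _)
  refine ⟨U, by fun_prop, ?_, hfo, hUd, ?_, ?_, ?_, ?_⟩
  · intro x hx
    rw [huf x hx, hU]
    simp only
    rw [hFe 0 x le_rfl hx.1 hx.2]
  · intro x hx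
    have hsg := (semigroup_aux (a := 1 - α) (b := α) (x := x) (by linarith) h0 (by linarith)
      (hwL1.mono_set (Ioo_subset_Ioo_right hx.2.le))).1
    refine IntegrableOn.congr_fun (Integrable.const_mul hsg (((Real.Gamma α)⁻¹ : ℝ) : ℂ))
      (fun t _ => ?_) measurableSet_Ioo
    have : 1 - α - 1 = -α := by ring
    simp only [this, hf_eq t]
    ring
  · intro x hx
    have hsg := (semigroup_aux (a := 1 - α) (b := α) (x := x) (by linarith) h0 (by linarith)
      (hwL1.mono_set (Ioo_subset_Ioo_right hx.2.le))).2
    have e1 : 1 - α - 1 = -α := by ring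
    have e2 : 1 - α + α - 1 = 0 := by ring
    have e3 : ProbabilityTheory.beta (1 - α) α = Real.Gamma (1 - α) * Real.Gamma α := by
      rw [ProbabilityTheory.beta, sub_add_cancel, Real.Gamma_one, div_one]
    rw [e1, e2, e3] at hsg
    have hl : ∀ t, (((x - t) ^ (-α) : ℝ) : ℂ) * f t = (((Real.Gamma α)⁻¹ : ℝ) : ℂ) *
        ((((x - t) ^ (-α) : ℝ) : ℂ) *
          ∫ p in (0:ℝ)..t, (((t - p) ^ (α - 1) : ℝ) : ℂ) * w p) := by
      intro t
      rw [hf_eq t]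
      ring
    simp_rw [hl]
    rw [integral_const_mul, hsg, hv_eq, intervalIntegral.integral_of_le hx.1.le,
      integral_Ioc_eq_integral_Ioo]
    simp_rw [Real.rpow_zero, one_mul]
    rw [integral_const_mul, ← mul_assoc]
    congr 1
    rw [← Complex.ofReal_mul]
    congr 1
    field_simp
  · refine (hVc.aestronglyMeasurable (μ := volume.restrict (Ioo 0 1))).congr ?_
    filter_upwards [ae_restrict_mem measurableSet_Ioo] with x hx
    rw [hv_eq, hVe 0 x le_rfl hx.1.le hx.2.le]
  · set κ : ℂ := (((Real.Gamma α)⁻¹ * ProbabilityTheory.beta 1 α : ℝ) : ℂ) with hκ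
    -- the semigroup law `I¹ I^α = I^(1+α)`
    have hrep : ∀ x ∈ Icc (0:ℝ) 1, U x - U 0 =
        κ * ∫ q in Ioo 0 1, ((max (x - q) 0 ^ α : ℝ) : ℂ) * w q := by
      intro x hx
      have hsg := (semigroup_aux (a := 1) (b := α) (x := x) one_pos h0 (by linarith)
        (hwL1.mono_set (Ioo_subset_Ioo_right hx.2))).2
      have e2 : 1 + α - 1 = α := by ring
      simp only [sub_self, Real.rpow_zero, Complex.ofReal_one, one_mul, e2] at hsg
      rw [hUd 0 x le_rfl hx.1 hx.2, intervalIntegral.integral_of_le hx.1,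
        integral_Ioc_eq_integral_Ioo]
      simp_rw [hf_eq]
      rw [integral_const_mul, hsg]
      have hr : ∫ q in Ioo 0 1, ((max (x - q) 0 ^ α : ℝ) : ℂ) * w q =
          ∫ q in Ioo 0 x, (((x - q) ^ α : ℝ) : ℂ) * w q := by
        rw [setIntegral_eq_of_subset_of_forall_sdiff_eq_zero (s := Ioo 0 x) measurableSet_Ioo
          (Ioo_subset_Ioo_right hx.2) ?_]
        · refine setIntegral_congr_fun measurableSet_Ioo fun q hq => ?_
          rw [max_eq_left (sub_nonneg.2 hq.2.le)]
        · intro q hq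
          have : x ≤ q := by
            by_contra hlt
            exact hq.2 ⟨hq.1.1, not_le.1 hlt⟩
          rw [max_eq_right (sub_nonpos.2 this), Real.zero_rpow h0.ne']
          simp
      rw [hr, hκ, ← integral_const_mul, ← integral_const_mul]
      congr 1 with q
      push_cast
      ring
    have hki : ∀ x ∈ Icc (0:ℝ) 1,
        IntegrableOn (fun q => ((max (x - q) 0 ^ α : ℝ) : ℂ) * w q) (Ioo 0 1) := by
      intro x hx
      refine Integrable.bdd_mul (c := 1) hwL1 (Measurable.aestronglyMeasurable (by fun_prop)) ?_
      filter_upwards [ae_restrict_mem measurableSet_Ioo] with q hq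
      rw [Complex.norm_real, Real.norm_of_nonneg (by positivity)]
      refine Real.rpow_le_one (le_max_right _ _) (max_le ?_ zero_le_one) h0.le
      linarith [hx.2, hq.1]
    refine ⟨‖κ‖ₑ ^ 2 * (ENNReal.ofReal (2 / α ^ 2) * ∫⁻ q in Ioo 0 1, ‖w q‖ₑ ^ 2),
      ENNReal.mul_ne_top (ENNReal.pow_ne_top enorm_ne_top)
        (ENNReal.mul_ne_top ENNReal.ofReal_ne_top hWtop), ?_⟩
    intro x hx y hy hxy
    have hd : U y - U x = κ *
        ∫ q in Ioo 0 1, ((max (y - q) 0 ^ α - max (x - q) 0 ^ α : ℝ) : ℂ) * w q := by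
      have : U y - U x = (U y - U 0) - (U x - U 0) := by ring
      rw [this, hrep x hx, hrep y hy, ← mul_sub, ← integral_sub (hki y hy) (hki x hx)]
      congr 2 with q
      push_cast
      ring
    rw [hd, enorm_mul, mul_pow, mul_assoc]
    gcongr
    exact holder_increment hα hwm' hx hxy

/-- The interpolation estimate for the squares of the norms. -/
lemma sq_estimate {α : ℝ} (hα : α ∈ Ioo (0:ℝ) 1) {ε : ℝ} (hε : 0 < ε) :
    ∃ K : ℝ, 0 < K ∧ ∀ u w : ℝ → ℂ, InGraphA α u w →
      L2normSq (fracInt 1 w) ≤ ε * sobSeminormSq ((1 + α) / 2) u + K * L2normSq u := by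
  have h0 := hα.1
  have h1 := hα.2
  obtain ⟨C, hC, hest⟩ := marchaud_estimate hα
  have hΓ : 0 < Real.Gamma (1 - α) := Real.Gamma_pos_of_pos (by linarith)
  set B := C / Real.Gamma (1 - α) ^ 2 with hB
  have hB0 : 0 < B := by positivity
  obtain ⟨K, hK, hint⟩ := gag_interp (a := 2 + α) (b := 2 + α ^ 2) (η := ε / B) (by positivity)
    (by nlinarith) (by positivity)
  refine ⟨B * K, by positivity, fun u w huw => ?_⟩
  obtain ⟨U, hUc, hUe, hf, hUf, hfx, hv, hvm, H, hH, hhol⟩ := graph_core hα huw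
  obtain ⟨hStop, hS⟩ := sobSeminormSq_eq hα hUc hH hhol
  have hsob : sobSeminormSq ((1 + α) / 2) u = sobSeminormSq ((1 + α) / 2) U := by
    unfold sobSeminormSq
    refine intervalIntegral.integral_congr fun x hx => ?_
    refine intervalIntegral.integral_congr fun y hy => ?_
    rw [uIcc_of_le zero_le_one] at hx hy
    simp only [hUe x hx, hUe y hy]
  have hL2 : L2normSq u = L2normSq U := by
    unfold L2normSq
    refine intervalIntegral.integral_congr fun x hx => ?_
    rw [uIcc_of_le zero_le_one] at hx
    simp only [hUe x hx]
  have hLtop : ∫⁻ x in Ioo (0:ℝ) 1, ‖U x‖ₑ ^ 2 ≠ ⊤ := by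
    have : IntegrableOn (fun x => ‖U x‖ ^ 2) (Ioo 0 1) :=
      (((hUc.norm.pow 2).continuousOn (s := Icc 0 1)).integrableOn_Icc).mono_set
        Ioo_subset_Icc_self
    have := this.hasFiniteIntegral
    rw [HasFiniteIntegral] at this
    refine (lt_of_eq_of_lt ?_ this).ne
    congr 1 with q
    simp [enorm_pow]
  rw [hsob, hL2, hS, L2normSq_eq hvm, L2normSq_eq hUc.aestronglyMeasurable]
  set S := ∫⁻ x in Ioo 0 1, gag (2 + α) U x
  set L := ∫⁻ x in Ioo (0:ℝ) 1, ‖U x‖ₑ ^ 2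
  have h3 : ENNReal.ofReal (Real.Gamma (1 - α) ^ 2) * ∫⁻ x in Ioo 0 1, ‖fracInt 1 w x‖ₑ ^ 2 ≤
      ENNReal.ofReal C * (ENNReal.ofReal (ε / B) * S + ENNReal.ofReal K * L) := by
    calc _ = ∫⁻ x in Ioo 0 1,
          ‖∫ t in Ioo 0 x, (((x - t) ^ (-α) : ℝ) : ℂ) * fracInt α w t‖ₑ ^ 2 := by
          rw [← lintegral_const_mul' _ _ ENNReal.ofReal_ne_top]
          refine setLIntegral_congr_fun measurableSet_Ioo fun x hx => ?_
          rw [hv x hx, enorm_mul, mul_pow, ← ofReal_norm (Real.Gamma (1 - α) : ℂ),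
            Complex.norm_real, Real.norm_of_nonneg hΓ.le, ENNReal.ofReal_pow hΓ.le]
      _ ≤ _ := (hest U _ hUc hf hUf hfx).trans (by gcongr; exact hint U hUc)
  have h4 : ENNReal.ofReal C * (ENNReal.ofReal (ε / B) * S + ENNReal.ofReal K * L) ≠ ⊤ :=
    ENNReal.mul_ne_top ENNReal.ofReal_ne_top (ENNReal.add_ne_top.2
      ⟨ENNReal.mul_ne_top ENNReal.ofReal_ne_top hStop,
        ENNReal.mul_ne_top ENNReal.ofReal_ne_top hLtop⟩)
  have h5 := ENNReal.toReal_mono h4 h3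
  rw [ENNReal.toReal_mul, ENNReal.toReal_mul, ENNReal.toReal_add
    (ENNReal.mul_ne_top ENNReal.ofReal_ne_top hStop)
    (ENNReal.mul_ne_top ENNReal.ofReal_ne_top hLtop), ENNReal.toReal_mul, ENNReal.toReal_mul,
    ENNReal.toReal_ofReal (by positivity), ENNReal.toReal_ofReal hC.le,
    ENNReal.toReal_ofReal (by positivity), ENNReal.toReal_ofReal hK.le] at h5
  have h6 : C = B * Real.Gamma (1 - α) ^ 2 := by
    rw [hB]
    field_simp
  rw [h6] at h5
  have h7 : 0 < Real.Gamma (1 - α) ^ 2 := by positivity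
  refine le_of_mul_le_mul_left (h5.trans (le_of_eq ?_)) h7
  field_simp

/-- the interpolation-type estimate for D^a u = I^1 w on the domain of A. -/
theorem statement_7 (α : ℝ) (hα : α ∈ Set.Ioo (0:ℝ) 1) :
    ∀ ε > (0:ℝ), ∃ c > (0:ℝ), ∀ u w : ℝ → ℂ, InGraphA α u w →
      Real.sqrt (L2normSq (fracInt 1 w)) ≤
        ε * Real.sqrt (sobNormSq ((1 + α) / 2) u) + c * Real.sqrt (L2normSq u) := by
  intro ε hε
  obtain ⟨K, hK, h⟩ := sq_estimate hα (pow_pos hε 2)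
  refine ⟨√K, Real.sqrt_pos.2 hK, fun u w huw => ?_⟩
  have hL : 0 ≤ L2normSq u :=
    intervalIntegral.integral_nonneg zero_le_one fun x _ => by positivity
  have hS : 0 ≤ sobSeminormSq ((1 + α) / 2) u :=
    intervalIntegral.integral_nonneg zero_le_one fun x _ =>
      intervalIntegral.integral_nonneg zero_le_one fun y _ => by positivity
  have h1 := h u w huw
  rw [Real.sqrt_le_left (by positivity)]
  unfold sobNormSq
  have h2 := Real.sq_sqrt (add_nonneg hL hS)
  have h3 := Real.sq_sqrt hL
  have h4 := Real.sq_sqrt hK.le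
  have h5 : 0 ≤ 2 * (ε * √(L2normSq u + sobSeminormSq ((1 + α) / 2) u)) *
      (√K * √(L2normSq u)) := by positivity
  have h6 : 0 ≤ ε ^ 2 * L2normSq u := by positivity
  rw [add_sq, mul_pow, mul_pow, h2, h3, h4]
  linarith
end
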